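/- arXiv:2403.17079 — 2 statements merged into one kernel-verified Lean document; each statement's English description precedes it below -/
import Mathlib

section
/- Let (Q, m, k) be a commutative Noetherian local ring and let f, g be an exact pair of zerodivisors with f ∈ m ∖ m², i.e. f and g are nonzero elements of m with f ∉ m², ann_Q(f) = (g) and ann_Q(g) = (f). Set R = Q/(f). Then for every finitely generated R-module M and every integer i ≥ 0 one has the equality β_i^Q(M) = Σ_{j=0}^{i} β_j^R(M). (Equivalently, P_M^Q(t) = P_M^R(t)/(1−t).) -/
open CategoryTheory TensorProduct

/-- The `i`-th Betti number of a module `M` over a local ring `A`: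
`β_i^A(M) = dim_k Tor_i^A(M, k)`, computed as the `k`-dimension of
`k ⊗_A Tor_i^A(M, k)` (the two agree since `Tor_i^A(M, k)` is a `k`-vector
space, being annihilated by the maximal ideal of `A`). -/
noncomputable def bettiNumber (A : Type) [CommRing A] [IsLocalRing A]
    (M : Type) [AddCommGroup M] [Module A M] (i : ℕ) : ℕ :=
  Module.finrank (IsLocalRing.ResidueField A)
    (IsLocalRing.ResidueField A ⊗[A]
      (((Tor (ModuleCat A) i).obj (ModuleCat.of A M)).obj
        (ModuleCat.of A (IsLocalRing.ResidueField A))))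

/-!
Write `R = Q/(f)` and let `k` be the residue field. By Levin's theory of large homomorphisms, if
`Tor^Q(R, k) → Tor^Q(k, k)` is injective then a minimal cover `R ^ b → M` stays injective on
`Tor^Q(-, k)`, because `R ^ b → k ^ b` factors through it; dimension shifting along such covers
gives `P_M^Q = P_M^R * P_R^Q`. The minimal short exact sequences `0 → (f) → Q → R → 0` and
`0 → R → Q → (f) → 0`, with maps `g` and `f` in the second, give `P_R^Q = 1/(1-t)`.

The injectivity for `R → k` follows by dimension shifting from the injectivity for `(f) → m`, one
degree lower. In turn, the latter follows from the former if, for a free cover `E → m` and a lift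
`ε ∈ E` of `f`, the syzygy `g • ε` is not in `m • ker (E → m)`. Otherwise `g • ε` would be the
Koszul boundary of some `w ∈ ⋀² E`. The divided powers of `w` satisfy `d w⁽ᵏ⁺¹⁾ = g • ε w⁽ᵏ⁾` and
`d (ε w⁽ᵏ⁾) = f • w⁽ᵏ⁾`, so exactness of the pair shows, by descending induction on `k`, that each
`w⁽ᵏ⁾` is a boundary modulo `g`. For `k = 0` this puts `1` into `m`.
-/

universe u

section Tor

open MonoidalCategory Limits

variable {A : Type u} [CommRing A] {X : ModuleCat.{u} A} (P : ProjectiveResolution X)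

/-- The functor `M ↦ M ⊗ P` for a fixed projective resolution `P`. Resolving the second argument of
`Tor(M, X)` once and for all makes `Tor(-, X)` visibly a homological functor of `M`. -/
noncomputable def tensorResolution : ModuleCat.{u} A ⥤ ChainComplex (ModuleCat.{u} A) ℕ where
  obj M := (((tensoringLeft (ModuleCat.{u} A)).obj M).mapHomologicalComplex _).obj P.complex
  map φ :=
    (NatTrans.mapHomologicalComplex ((tensoringLeft (ModuleCat.{u} A)).map φ) _).app P.complex
  map_id M := by simp
  map_comp φ ψ := by simp

lemma tensorResolution_map_f {M N : ModuleCat.{u} A} (φ : M ⟶ N) (n : ℕ) :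
    ((tensorResolution P).map φ).f n = φ ▷ (P.complex.X n) := rfl

instance : (tensorResolution P).Additive where
  map_add {M N φ ψ} := by
    ext n : 1
    simp only [HomologicalComplex.add_f_apply, tensorResolution_map_f]
    exact MonoidalPreadditive.add_whiskerRight _ _

lemma flat_projectiveResolution_X (n : ℕ) : Module.Flat A (P.complex.X n) := by
  have : Projective (P.complex.X n) := inferInstance
  have : Module.Projective A (P.complex.X n) :=
    (IsProjective.iff_projective (R := A) (P.complex.X n)).2 this
  infer_instance

lemma shortExact_map_tensorResolution {S : ShortComplex (ModuleCat.{u} A)} (hS : S.ShortExact) :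
    (S.map (tensorResolution P)).ShortExact := by
  rw [HomologicalComplex.shortExact_iff_degreewise_shortExact]
  intro n
  have := flat_projectiveResolution_X P n
  exact hS.map_of_exact (tensorRight (P.complex.X n))

/-- The functor `M ↦ H_n(M ⊗ P)`, a model of `Tor_n(-, X)`. -/
noncomputable def torFunctor (n : ℕ) : ModuleCat.{u} A ⥤ ModuleCat.{u} A :=
  tensorResolution P ⋙ HomologicalComplex.homologyFunctor _ _ n

instance (n : ℕ) : (torFunctor P n).Additive := by
  unfold torFunctor; infer_instance

/-- The identification of `Tor_n(M, X)` with `H_n(M ⊗ P)`. -/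
noncomputable def torIso (n : ℕ) (M : ModuleCat.{u} A) :
    ((Tor (ModuleCat.{u} A) n).obj M).obj X ≅ (torFunctor P n).obj M :=
  P.isoLeftDerivedObj ((tensoringLeft (ModuleCat.{u} A)).obj M) n

lemma isZero_torFunctor_succ (n : ℕ) (M : ModuleCat.{u} A) [Module.Flat A M] :
    IsZero ((torFunctor P (n + 1)).obj M) := by
  have hP := P.complex_exactAt_succ n
  rw [HomologicalComplex.exactAt_iff' _ (n + 2) (n + 1) n (by simp) (by simp)] at hP
  have hMP := Module.Flat.lTensor_shortComplex_exact M _ hP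
  have hexact : ((tensorResolution P).obj M).ExactAt (n + 1) := by
    rw [HomologicalComplex.exactAt_iff' _ (n + 2) (n + 1) n (by simp) (by simp)]
    exact hMP
  exact hexact.isZero_homology

instance (M : ModuleCat.{u} A) :
    PreservesFiniteColimits ((tensoringLeft (ModuleCat.{u} A)).obj M) :=
  inferInstanceAs (PreservesFiniteColimits (tensorLeft M))

/-- The map `coker(M ⊗ P₁ → M ⊗ P₀) ⟶ M ⊗ X` induced by the augmentation `P₀ ⟶ X`. -/
noncomputable def tensorAugmentation (M : ModuleCat.{u} A) :
    ((tensorResolution P).obj M).opcycles 0 ⟶ M ⊗ X :=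
  P.fromLeftDerivedZero' ((tensoringLeft (ModuleCat.{u} A)).obj M)

instance (M : ModuleCat.{u} A) : IsIso (tensorAugmentation P M) :=
  inferInstanceAs (IsIso (P.fromLeftDerivedZero' ((tensoringLeft (ModuleCat.{u} A)).obj M)))

lemma pOpcycles_comp_tensorAugmentation (M : ModuleCat.{u} A) :
    ((tensorResolution P).obj M).pOpcycles 0 ≫ tensorAugmentation P M = M ◁ P.π.f 0 :=
  P.pOpcycles_comp_fromLeftDerivedZero' ((tensoringLeft (ModuleCat.{u} A)).obj M)

lemma tensorAugmentation_naturality {M N : ModuleCat.{u} A} (φ : M ⟶ N) :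
    HomologicalComplex.opcyclesMap ((tensorResolution P).map φ) 0 ≫ tensorAugmentation P N =
      tensorAugmentation P M ≫ φ ▷ X := by
  rw [← cancel_epi (HomologicalComplex.pOpcycles _ _), HomologicalComplex.p_opcyclesMap_assoc,
    pOpcycles_comp_tensorAugmentation, reassoc_of% (pOpcycles_comp_tensorAugmentation P M)]
  exact (whisker_exchange φ (P.π.f 0)).symm

/-- The identification of `H_0(M ⊗ P)` with `coker(M ⊗ P₁ → M ⊗ P₀)`. -/
noncomputable def torFunctorZeroIsoOpcycles (M : ModuleCat.{u} A) :
    (torFunctor P 0).obj M ≅ ((tensorResolution P).obj M).opcycles 0 :=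
  ChainComplex.isoHomologyι₀ ((tensorResolution P).obj M)

/-- The isomorphism `H_0(M ⊗ P) ≅ M ⊗ X`. -/
noncomputable def torFunctorZeroIso (M : ModuleCat.{u} A) : (torFunctor P 0).obj M ≅ M ⊗ X :=
  torFunctorZeroIsoOpcycles P M ≪≫ asIso (tensorAugmentation P M)

lemma torFunctorZeroIso_hom_naturality {M N : ModuleCat.{u} A} (φ : M ⟶ N) :
    (torFunctor P 0).map φ ≫ (torFunctorZeroIso P N).hom =
      (torFunctorZeroIso P M).hom ≫ φ ▷ X := by
  have hι : (torFunctor P 0).map φ ≫ (torFunctorZeroIsoOpcycles P N).hom =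
      (torFunctorZeroIsoOpcycles P M).hom ≫
        HomologicalComplex.opcyclesMap ((tensorResolution P).map φ) 0 :=
    HomologicalComplex.homologyι_naturality _ _
  simp only [torFunctorZeroIso, Iso.trans_hom, asIso_hom, Category.assoc]
  rw [reassoc_of% hι, tensorAugmentation_naturality]

variable {M N L : Type u} [AddCommGroup M] [Module A M] [AddCommGroup N] [Module A N]
  [AddCommGroup L] [Module A L]

/-- The module `Tor_n(M, X)`, computed as `H_n(M ⊗ P)`, for an unbundled module `M`. -/
noncomputable abbrev tor (n : ℕ) (M : Type u) [AddCommGroup M] [Module A M] : ModuleCat.{u} A :=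
  (torFunctor P n).obj (ModuleCat.of A M)

/-- The additive map `φ ↦ Tor_n(φ, X)`. -/
noncomputable def torMap (n : ℕ) : (M →ₗ[A] N) →+ (tor P n M →ₗ[A] tor P n N) :=
  AddMonoidHom.mk' (fun φ => ((torFunctor P n).map (ModuleCat.ofHom φ)).hom) fun φ ψ => by
    rw [show ModuleCat.ofHom (φ + ψ) = ModuleCat.ofHom φ + ModuleCat.ofHom ψ from rfl,
      Functor.map_add, ModuleCat.hom_add]

lemma torMap_id (n : ℕ) : torMap P n (LinearMap.id : M →ₗ[A] M) = LinearMap.id :=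
  congrArg ModuleCat.Hom.hom ((torFunctor P n).map_id (ModuleCat.of A M))

lemma torMap_comp (n : ℕ) (ψ : N →ₗ[A] L) (φ : M →ₗ[A] N) :
    torMap P n (ψ ∘ₗ φ) = torMap P n ψ ∘ₗ torMap P n φ :=
  congrArg ModuleCat.Hom.hom ((torFunctor P n).map_comp (ModuleCat.ofHom φ) (ModuleCat.ofHom ψ))

lemma torMap_injective_of_comp {n : ℕ} {φ : M →ₗ[A] N} {ψ : N →ₗ[A] L}
    (h : Function.Injective (torMap P n (ψ ∘ₗ φ))) : Function.Injective (torMap P n φ) := by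
  rw [torMap_comp, LinearMap.coe_comp] at h
  exact h.of_comp

lemma subsingleton_tor_succ (n : ℕ) (M : Type u) [AddCommGroup M] [Module A M] [Module.Flat A M] :
    Subsingleton (tor P (n + 1) M) :=
  have : Module.Flat A (ModuleCat.of A M) := ‹Module.Flat A M›
  ModuleCat.subsingleton_of_isZero (isZero_torFunctor_succ P n (ModuleCat.of A M))

/-- `Tor_0(M, X) ≃ M ⊗ X`. -/
noncomputable def torZeroEquiv (M : Type u) [AddCommGroup M] [Module A M] :
    tor P 0 M ≃ₗ[A] M ⊗[A] X :=
  (torFunctorZeroIso P (ModuleCat.of A M)).toLinearEquiv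

lemma torZeroEquiv_torMap (φ : M →ₗ[A] N) (t : tor P 0 M) :
    torZeroEquiv P N (torMap P 0 φ t) = φ.rTensor X (torZeroEquiv P M t) :=
  congrArg (fun h => h.hom t) (torFunctorZeroIso_hom_naturality P (ModuleCat.ofHom φ))

lemma torMap_zero_surjective {φ : M →ₗ[A] N} (hφ : Function.Surjective φ) :
    Function.Surjective (torMap P 0 φ) := by
  intro t
  obtain ⟨s, hs⟩ := LinearMap.rTensor_surjective X hφ (torZeroEquiv P N t)
  refine ⟨(torZeroEquiv P M).symm s, (torZeroEquiv P N).injective ?_⟩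
  rw [torZeroEquiv_torMap, LinearEquiv.apply_symm_apply, hs]

/-- Tensors `n ⊗ x` with `n ∈ I N` and `I = ann X` vanish. -/
lemma torMap_zero_eq_zero {φ : M →ₗ[A] N}
    (hφ : LinearMap.range φ ≤ Module.annihilator A X • ⊤) : torMap P 0 φ = 0 := by
  suffices φ.rTensor X = 0 by
    ext t
    apply (torZeroEquiv P N).injective
    rw [torZeroEquiv_torMap, this, LinearMap.zero_apply, LinearMap.zero_apply, map_zero]
  have tmul_eq_zero (y : N) (hy : y ∈ Module.annihilator A X • (⊤ : Submodule A N)) (x : X) :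
      y ⊗ₜ[A] x = 0 := by
    induction hy using Submodule.smul_induction_on' with
    | smul a ha y _ =>
      rw [TensorProduct.smul_tmul, Module.mem_annihilator.1 ha, TensorProduct.tmul_zero]
    | add y _ z _ hy hz => rw [TensorProduct.add_tmul, hy, hz, add_zero]
  ext m x
  exact tmul_eq_zero _ (hφ ⟨m, rfl⟩) x

lemma torMap_proj_comp_single_apply (n : ℕ) {b : ℕ} (i j : Fin b) (t : tor P n M) :
    torMap P n (LinearMap.proj i) (torMap P n (LinearMap.single A (fun _ => M) j) t) =
      if i = j then t else 0 := by
  rw [← LinearMap.comp_apply, ← torMap_comp]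
  split_ifs with h
  · rw [h, LinearMap.proj_comp_single_same, torMap_id, LinearMap.id_apply]
  · rw [LinearMap.proj_comp_single_ne _ _ _ _ h, map_zero, LinearMap.zero_apply]

lemma sum_torMap_single_torMap_proj (n : ℕ) {b : ℕ} (t : tor P n (Fin b → M)) :
    ∑ j, torMap P n (LinearMap.single A (fun _ => M) j) (torMap P n (LinearMap.proj j) t) = t := by
  have sum_eq_id : ∑ j, LinearMap.single A (fun _ : Fin b => M) j ∘ₗ LinearMap.proj j =
      LinearMap.id := by
    ext j y k
    simp [Pi.single_apply]
  calc
    _ = (torMap P n (∑ j, LinearMap.single A (fun _ : Fin b => M) j ∘ₗ LinearMap.proj j)) t := by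
      simp only [map_sum, torMap_comp, LinearMap.sum_apply, LinearMap.comp_apply]
    _ = t := by rw [sum_eq_id, torMap_id, LinearMap.id_apply]

/-- The isomorphism `Tor_n(M ^ b, X) ≃ Tor_n(M, X) ^ b` given by the projections. -/
noncomputable def torPiEquiv (n b : ℕ) (M : Type u) [AddCommGroup M] [Module A M] :
    tor P n (Fin b → M) ≃ₗ[A] (Fin b → tor P n M) where
  toFun t j := torMap P n (LinearMap.proj j) t
  map_add' s t := by ext j; exact map_add _ s t
  map_smul' a t := by ext j; exact map_smul _ a t
  invFun y := ∑ j, torMap P n (LinearMap.single A (fun _ => M) j) (y j)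
  left_inv t := sum_torMap_single_torMap_proj P n t
  right_inv y := by
    funext i
    simp only [map_sum, torMap_proj_comp_single_apply, Finset.sum_ite_eq, Finset.mem_univ, if_true]

lemma length_tor_pi (n b : ℕ) (M : Type u) [AddCommGroup M] [Module A M] :
    Module.length A (tor P n (Fin b → M)) = b * Module.length A (tor P n M) := by
  simp [(torPiEquiv P n b M).length_eq]

end Tor

section LongExactSequence

variable {A : Type u} [CommRing A] {M N L : Type u} [AddCommGroup M] [Module A M] [AddCommGroup N]
  [Module A N] [AddCommGroup L] [Module A L]

/-- The sequence `0 → M → N → L → 0` of linear maps `u : M → N` and `v : N → L` is short exact. This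
is the unbundled form of `CategoryTheory.ShortComplex.ShortExact`. -/
structure IsShortExact (u : M →ₗ[A] N) (v : N →ₗ[A] L) : Prop where
  injective : Function.Injective u
  exact : Function.Exact u v
  surjective : Function.Surjective v

lemma isShortExact_subtype_mkQ (K : Submodule A N) : IsShortExact K.subtype K.mkQ :=
  ⟨K.subtype_injective, LinearMap.exact_subtype_mkQ K, K.mkQ_surjective⟩

lemma isShortExact_ker_subtype {v : N →ₗ[A] L} (hv : Function.Surjective v) :
    IsShortExact (LinearMap.ker v).subtype v :=
  ⟨Submodule.subtype_injective _, LinearMap.exact_subtype_ker_map v, hv⟩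

lemma torMap_eq_zero_of_range_le {X : ModuleCat.{u} A} (P : ProjectiveResolution X)
    [Module.Flat A N] {u : M →ₗ[A] N}
    (hu : LinearMap.range u ≤ Module.annihilator A X • ⊤) : ∀ n, torMap P n u = 0
  | 0 => torMap_zero_eq_zero P hu
  | n + 1 =>
    have := subsingleton_tor_succ P n N
    Subsingleton.elim _ _

namespace IsShortExact

variable {X : ModuleCat.{u} A} (P : ProjectiveResolution X) {u : M →ₗ[A] N} {v : N →ₗ[A] L}

lemma restrictScalars (Q : Type u) [CommRing Q] [Algebra Q A] [Module Q M] [IsScalarTower Q A M]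
    [Module Q N] [IsScalarTower Q A N] [Module Q L] [IsScalarTower Q A L]
    (h : IsShortExact u v) : IsShortExact (u.restrictScalars Q) (v.restrictScalars Q) :=
  ⟨h.injective, h.exact, h.surjective⟩

/-- The short complex of module objects attached to a short exact sequence of linear maps. -/
noncomputable def shortComplex (h : IsShortExact u v) : ShortComplex (ModuleCat.{u} A) :=
  ShortComplex.mk (ModuleCat.ofHom u) (ModuleCat.ofHom v) <|
    ModuleCat.hom_ext (LinearMap.ext h.exact.apply_apply_eq_zero)

lemma shortExact (h : IsShortExact u v) : h.shortComplex.ShortExact where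
  exact := (ShortComplex.ShortExact.moduleCat_exact_iff_function_exact _).2 h.exact
  mono_f := (ModuleCat.mono_iff_injective _).2 h.injective
  epi_g := (ModuleCat.epi_iff_surjective _).2 h.surjective

/-- The connecting map `Tor_{n+1}(L, X) → Tor_n(M, X)` of a short exact sequence
`0 → M → N → L → 0`. -/
noncomputable def torδ (h : IsShortExact u v) (n : ℕ) : tor P (n + 1) L →ₗ[A] tor P n M :=
  ((shortExact_map_tensorResolution P h.shortExact).δ (n + 1) n (by simp)).hom

lemma exact_torδ_torMap (h : IsShortExact u v) (n : ℕ) :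
    Function.Exact (h.torδ P n) (torMap P n u) :=
  (ShortComplex.ShortExact.moduleCat_exact_iff_function_exact _).1
    ((shortExact_map_tensorResolution P h.shortExact).homology_exact₁ (n + 1) n (by simp))

lemma exact_torMap_torMap (h : IsShortExact u v) (n : ℕ) :
    Function.Exact (torMap P n u) (torMap P n v) :=
  (ShortComplex.ShortExact.moduleCat_exact_iff_function_exact _).1
    ((shortExact_map_tensorResolution P h.shortExact).homology_exact₂ n)

lemma exact_torMap_torδ (h : IsShortExact u v) (n : ℕ) :
    Function.Exact (torMap P (n + 1) v) (h.torδ P n) :=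
  (ShortComplex.ShortExact.moduleCat_exact_iff_function_exact _).1
    ((shortExact_map_tensorResolution P h.shortExact).homology_exact₃ (n + 1) n (by simp))

lemma torδ_naturality {M' N' L' : Type u} [AddCommGroup M'] [Module A M'] [AddCommGroup N']
    [Module A N'] [AddCommGroup L'] [Module A L'] (h : IsShortExact u v)
    {u' : M' →ₗ[A] N'} {v' : N' →ₗ[A] L'} (h' : IsShortExact u' v')
    {a : M →ₗ[A] M'} {b : N →ₗ[A] N'} {c : L →ₗ[A] L'}
    (hab : u' ∘ₗ a = b ∘ₗ u) (hbc : v' ∘ₗ b = c ∘ₗ v) (n : ℕ) :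
    torMap P n a ∘ₗ h.torδ P n = h'.torδ P n ∘ₗ torMap P (n + 1) c := by
  let φ : h.shortComplex ⟶ h'.shortComplex :=
    { τ₁ := ModuleCat.ofHom a
      τ₂ := ModuleCat.ofHom b
      τ₃ := ModuleCat.ofHom c
      comm₁₂ := ModuleCat.hom_ext hab
      comm₂₃ := ModuleCat.hom_ext hbc }
  exact congrArg ModuleCat.Hom.hom <| HomologicalComplex.HomologySequence.δ_naturality
    ((tensorResolution P).mapShortComplex.map φ) (shortExact_map_tensorResolution P h.shortExact)
    (shortExact_map_tensorResolution P h'.shortExact) (n + 1) n (by simp)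

lemma torδ_injective [Module.Flat A N] (h : IsShortExact u v) (n : ℕ) :
    Function.Injective (h.torδ P n) := by
  have := subsingleton_tor_succ P n N
  rw [← LinearMap.ker_eq_bot, (h.exact_torMap_torδ P n).linearMap_ker_eq, LinearMap.range_eq_bot]
  exact Subsingleton.elim _ _

lemma torMap_succ_injective [Module.Flat A N] {M' N' L' : Type u} [AddCommGroup M'] [Module A M']
    [AddCommGroup N'] [Module A N'] [AddCommGroup L'] [Module A L'] (h : IsShortExact u v)
    {u' : M' →ₗ[A] N'} {v' : N' →ₗ[A] L'} (h' : IsShortExact u' v')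
    {a : M →ₗ[A] M'} {b : N →ₗ[A] N'} {c : L →ₗ[A] L'}
    (hab : u' ∘ₗ a = b ∘ₗ u) (hbc : v' ∘ₗ b = c ∘ₗ v) {n : ℕ}
    (ha : Function.Injective (torMap P n a)) : Function.Injective (torMap P (n + 1) c) := by
  refine Function.Injective.of_comp (f := h'.torδ P n) ?_
  rw [← LinearMap.coe_comp, ← h.torδ_naturality P h' hab hbc n, LinearMap.coe_comp]
  exact ha.comp (h.torδ_injective P n)

lemma length_tor_succ_of_minimal [Module.Flat A N] (h : IsShortExact u v)
    (hu : LinearMap.range u ≤ Module.annihilator A X • ⊤) (n : ℕ) :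
    Module.length A (tor P (n + 1) L) = Module.length A (tor P n M) := by
  refine (LinearEquiv.ofBijective (h.torδ P n) ⟨h.torδ_injective P n, fun t => ?_⟩).length_eq
  rw [← Set.mem_range, ← (h.exact_torδ_torMap P n) t, torMap_eq_zero_of_range_le P hu,
    LinearMap.zero_apply]

end IsShortExact

lemma annihilator_le_annihilator_tor {X : ModuleCat.{u} A} (P : ProjectiveResolution X) (n : ℕ)
    (M : Type u) [AddCommGroup M] [Module A M] :
    Module.annihilator A X ≤ Module.annihilator A (tor P n M) := by
  induction n generalizing M with
  | zero =>
    rw [(torZeroEquiv P M).annihilator_eq]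
    intro a ha
    rw [Module.mem_annihilator]
    intro s
    induction s using TensorProduct.induction_on with
    | zero => exact smul_zero a
    | add s t hs ht => rw [smul_add, hs, ht, add_zero]
    | tmul y x =>
      rw [← TensorProduct.tmul_smul, Module.mem_annihilator.1 ha, TensorProduct.tmul_zero]
  | succ n ih =>
    have h := isShortExact_ker_subtype
      (Finsupp.linearCombination_surjective A (Function.surjective_id (α := M)))
    exact (ih _).trans ((h.torδ P n).annihilator_le_of_injective (h.torδ_injective P n))

end LongExactSequence

section Cover

variable {A : Type u} [CommRing A] {X : ModuleCat.{u} A} (P : ProjectiveResolution X)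
  {K M N Y : Type u} [AddCommGroup K] [Module A K] [AddCommGroup M] [Module A M] [AddCommGroup N]
  [Module A N] [AddCommGroup Y] [Module A Y] {b : ℕ} {π : N →ₗ[A] Y}
  {u : K →ₗ[A] (Fin b → N)} {v : (Fin b → N) →ₗ[A] M}

lemma torMap_compLeft_injective {n : ℕ} (hπ : Function.Injective (torMap P n π)) :
    Function.Injective (torMap P n (π.compLeft (Fin b))) := by
  intro s t hst
  apply (torPiEquiv P n b N).injective
  funext j
  apply hπ
  have proj_comp : π ∘ₗ LinearMap.proj j = LinearMap.proj j ∘ₗ π.compLeft (Fin b) := rfl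
  change (torMap P n π ∘ₗ torMap P n (LinearMap.proj j)) s =
    (torMap P n π ∘ₗ torMap P n (LinearMap.proj j)) t
  rw [← torMap_comp, proj_comp, torMap_comp, LinearMap.comp_apply, hst, LinearMap.comp_apply]

lemma IsShortExact.torMap_injective_of_cover (h : IsShortExact u v)
    (hu : π.compLeft (Fin b) ∘ₗ u = 0) {n : ℕ} (hπ : Function.Injective (torMap P n π)) :
    Function.Injective (torMap P n v) := by
  -- `π ^ b` kills the kernel of `v`, hence factors through `v`.
  obtain ⟨σ, hσ⟩ := (LinearMap.exact_lcomp_of_exact_of_surjective (N := Fin b → Y) h.exact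
    h.surjective (π.compLeft (Fin b))).1 hu
  refine torMap_injective_of_comp P (ψ := σ) ?_
  rw [show σ ∘ₗ v = _ from hσ]
  exact torMap_compLeft_injective P hπ

lemma IsShortExact.length_tor_zero_of_cover (h : IsShortExact u v)
    (hu : π.compLeft (Fin b) ∘ₗ u = 0) (hπ : Function.Injective (torMap P 0 π)) :
    Module.length A (tor P 0 M) = b * Module.length A (tor P 0 N) := by
  rw [← length_tor_pi]
  exact (LinearEquiv.ofBijective (torMap P 0 v)
    ⟨h.torMap_injective_of_cover P hu hπ, torMap_zero_surjective P h.surjective⟩).length_eq.symm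

lemma IsShortExact.length_tor_succ_of_cover (h : IsShortExact u v)
    (hu : π.compLeft (Fin b) ∘ₗ u = 0) (hπ : ∀ n, Function.Injective (torMap P n π)) (n : ℕ) :
    Module.length A (tor P (n + 1) M) =
      b * Module.length A (tor P (n + 1) N) + Module.length A (tor P n K) := by
  have torδ_surjective : Function.Surjective (h.torδ P n) := fun t => by
    apply (h.exact_torδ_torMap P n t).1
    apply h.torMap_injective_of_cover P hu (hπ n)
    rw [(h.exact_torMap_torMap P n).apply_apply_eq_zero, map_zero]
  rw [← length_tor_pi]
  exact Module.length_eq_add_of_exact (torMap P (n + 1) v) (h.torδ P n)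
    (h.torMap_injective_of_cover P hu (hπ (n + 1))) torδ_surjective (h.exact_torMap_torδ P n)

end Cover

section Koszul

open ExteriorAlgebra

variable {Q E : Type*} [CommRing Q] [AddCommGroup E] [Module Q E] (x : Module.Dual Q E)

/-- The differential of the Koszul complex of `x : E → Q`, on the exterior algebra of `E`. -/
noncomputable def koszulD : ExteriorAlgebra Q E →ₗ[Q] ExteriorAlgebra Q E :=
  CliffordAlgebra.contractLeft (Q := (0 : QuadraticForm Q E)) x

lemma koszulD_ι_mul (a : E) (z : ExteriorAlgebra Q E) :
    koszulD x (ι Q a * z) = x a • z - ι Q a * koszulD x z :=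
  CliffordAlgebra.contractLeft_ι_mul x a z

lemma koszulD_one : koszulD x 1 = 0 :=
  CliffordAlgebra.contractLeft_one (Q := (0 : QuadraticForm Q E)) x

lemma koszulD_algebraMap (r : Q) : koszulD x (algebraMap Q _ r) = 0 :=
  CliffordAlgebra.contractLeft_algebraMap (Q := (0 : QuadraticForm Q E)) x r

lemma koszulD_koszulD (z : ExteriorAlgebra Q E) : koszulD x (koszulD x z) = 0 :=
  CliffordAlgebra.contractLeft_contractLeft x z

lemma koszulD_ι (a : E) : koszulD x (ι Q a) = algebraMap Q _ (x a) :=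
  CliffordAlgebra.contractLeft_ι (Q := (0 : QuadraticForm Q E)) x a

lemma ι_mul_ι_eq_neg (a b : E) : ι Q a * ι Q b = -(ι Q b * ι Q a) :=
  eq_neg_of_add_eq_zero_left (ι_add_mul_swap a b)

lemma commute_ι_mul_ι (a b : E) (z : ExteriorAlgebra Q E) : Commute (ι Q a * ι Q b) z := by
  induction z using ExteriorAlgebra.induction with
  | algebraMap r => exact (Algebra.commutes r _).symm
  | ι c =>
    rw [commute_iff_eq, ← mul_assoc, ι_mul_ι_eq_neg c a, neg_mul, mul_assoc, mul_assoc,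
      ι_mul_ι_eq_neg c b, mul_neg, neg_neg]
  | mul y z hy hz => exact hy.mul_right hz
  | add y z hy hz => exact hy.add_right hz

lemma koszulD_ι_mul_ι_mul (a b : E) (z : ExteriorAlgebra Q E) :
    koszulD x (ι Q a * ι Q b * z) =
      koszulD x (ι Q a * ι Q b) * z + ι Q a * ι Q b * koszulD x z := by
  rw [mul_assoc, koszulD_ι_mul, koszulD_ι_mul, koszulD_ι_mul, koszulD_ι, sub_mul, mul_sub,
    mul_assoc (ι Q a), ← Algebra.smul_def, mul_assoc, smul_mul_assoc]
  abel

lemma koszulD_ι_mul_ι_mul_self (a b : E) : koszulD x (ι Q a * ι Q b) * (ι Q a * ι Q b) = 0 := by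
  have ι_mul_self_mul (c : E) (z : ExteriorAlgebra Q E) : ι Q c * (ι Q c * z) = 0 := by
    rw [← mul_assoc, ι_sq_zero, zero_mul]
  rw [koszulD_ι_mul, koszulD_ι, ← Algebra.commutes, ← Algebra.smul_def, sub_mul, smul_mul_assoc,
    smul_mul_assoc, ι_mul_self_mul, ι_mul_ι_eq_neg a b, mul_neg, ι_mul_self_mul]
  simp

lemma algebraMapInv_koszulD_mem_range (z : ExteriorAlgebra Q E) :
    algebraMapInv (koszulD x z) ∈ LinearMap.range x := by
  induction z using CliffordAlgebra.left_induction with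
  | algebraMap r =>
    rw [koszulD_algebraMap, map_zero]
    exact zero_mem _
  | add y z hy hz =>
    rw [map_add, map_add]
    exact add_mem hy hz
  | ι_mul z a _ =>
    change algebraMapInv (koszulD x (ι Q a * z)) ∈ LinearMap.range x
    have algebraMapInv_ι : algebraMapInv (ι Q a) = 0 := by simp [algebraMapInv]
    rw [koszulD_ι_mul, map_sub, map_mul, map_smul, algebraMapInv_ι, zero_mul, sub_zero,
      smul_eq_mul]
    exact Ideal.mul_mem_right _ _ ⟨a, rfl⟩

lemma exteriorPower_two_toAddSubmonoid : (⋀[Q]^2 E).toAddSubmonoid =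
    AddSubmonoid.closure {p | ∃ a b : E, ι Q a * ι Q b = p} := by
  rw [exteriorPower, pow_two, Submodule.mul_toAddSubmonoid, ← AddSubmonoid.closure_eq
    (LinearMap.range (ι Q : E →ₗ[Q] _)).toAddSubmonoid, AddSubmonoid.closure_mul_closure]
  congr 1
  ext p
  simp [Set.mem_mul]

/-- Divided powers of `w + p` for a product `p` of two elements of `E`: since `p² = 0`, one has
`(w + p)⁽ᵏ⁾ = w⁽ᵏ⁾ + p w⁽ᵏ⁻¹⁾`. -/
noncomputable def addDividedPowers (y : ℕ → ExteriorAlgebra Q E) (p : ExteriorAlgebra Q E) :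
    ℕ → ExteriorAlgebra Q E
  | 0 => y 0
  | k + 1 => y (k + 1) + p * y k

lemma koszulD_addDividedPowers {w : ExteriorAlgebra Q E} {y : ℕ → ExteriorAlgebra Q E}
    (y_zero : y 0 = 1) (koszulD_y : ∀ k, koszulD x (y (k + 1)) = koszulD x w * y k) (a b : E)
    (k : ℕ) :
    koszulD x (addDividedPowers y (ι Q a * ι Q b) (k + 1)) =
      koszulD x (ι Q a * ι Q b + w) * addDividedPowers y (ι Q a * ι Q b) k := by
  rw [addDividedPowers, map_add, koszulD_y, koszulD_ι_mul_ι_mul]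
  cases k with
  | zero =>
    rw [addDividedPowers, y_zero, koszulD_one, map_add, mul_zero, add_zero, mul_one, mul_one,
      mul_one, add_comm]
  | succ k =>
    have swap : koszulD x w * (ι Q a * ι Q b * y k) = ι Q a * ι Q b * (koszulD x w * y k) := by
      rw [← mul_assoc, ← (commute_ι_mul_ι a b _).eq, mul_assoc]
    have square : koszulD x (ι Q a * ι Q b) * (ι Q a * ι Q b * y k) = 0 := by
      rw [← mul_assoc, koszulD_ι_mul_ι_mul_self, zero_mul]
    rw [addDividedPowers, koszulD_y, map_add, add_mul, mul_add, mul_add, square, swap]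
    abel

lemma exists_dividedPowers {w : ExteriorAlgebra Q E} (hw : w ∈ ⋀[Q]^2 E) :
    ∃ y : ℕ → ExteriorAlgebra Q E, y 0 = 1 ∧
      (∀ k, koszulD x (y (k + 1)) = koszulD x w * y k) ∧ ∃ n, ∀ k ≥ n, y k = 0 := by
  rw [← Submodule.mem_toAddSubmonoid, exteriorPower_two_toAddSubmonoid] at hw
  induction hw using AddSubmonoid.closure_induction_left with
  | zero => exact ⟨fun k => if k = 0 then 1 else 0, by simp, by simp, 1, by simp; lia⟩
  | add_left p hp w _ ih =>
    obtain ⟨a, b, rfl⟩ := hp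
    obtain ⟨y, y_zero, koszulD_y, n, y_eq_zero⟩ := ih
    refine ⟨addDividedPowers y (ι Q a * ι Q b), y_zero,
      koszulD_addDividedPowers x y_zero koszulD_y a b, n + 1, fun k hk => ?_⟩
    obtain ⟨k, rfl⟩ := Nat.exists_eq_add_of_le' (Nat.le_of_add_left_le hk)
    rw [addDividedPowers, y_eq_zero _ (by lia), y_eq_zero _ (by lia), mul_zero, add_zero]

lemma exists_koszulD_eq_ι {v : E} (hv : v ∈ LinearMap.range x • LinearMap.ker x) :
    ∃ w ∈ ⋀[Q]^2 E, koszulD x w = ι Q v := by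
  induction hv using Submodule.smul_induction_on' with
  | smul c hc v hv =>
    obtain ⟨a, rfl⟩ := hc
    refine ⟨ι Q a * ι Q v, ?_, ?_⟩
    · rw [exteriorPower, pow_two]
      exact Submodule.mul_mem_mul ⟨a, rfl⟩ ⟨v, rfl⟩
    · rw [koszulD_ι_mul, koszulD_ι, LinearMap.mem_ker.1 hv, map_zero, mul_zero, sub_zero, map_smul]
  | add u _ v _ hu hv =>
    obtain ⟨w, hw, hwu⟩ := hu
    obtain ⟨w', hw', hwv⟩ := hv
    exact ⟨w + w', add_mem hw hw', by rw [map_add, map_add, hwu, hwv]⟩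

lemma exteriorAlgebra_free [Module.Free Q E] : Module.Free Q (ExteriorAlgebra Q E) := by
  obtain ⟨_, -⟩ := exists_wellFoundedLT (Module.Free.ChooseBasisIndex Q E)
  exact Module.Free.of_basis (Module.Free.chooseBasis Q E).ExteriorAlgebra

end Koszul

section ExactPair

variable {Q : Type*} [CommRing Q] {f g : Q}

/-- `f` and `g` annihilate exactly each other's multiples: `ann f = (g)` and `ann g = (f)`. As usual
for an exact pair of zerodivisors, except that `f` and `g` may be `0` here. -/
structure IsExactPair (f g : Q) : Prop where
  mul_left_eq_zero_iff : ∀ a, a * f = 0 ↔ a ∈ Ideal.span {g}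
  mul_right_eq_zero_iff : ∀ a, a * g = 0 ↔ a ∈ Ideal.span {f}

namespace IsExactPair

lemma symm (h : IsExactPair f g) : IsExactPair g f :=
  ⟨h.mul_right_eq_zero_iff, h.mul_left_eq_zero_iff⟩

lemma mul_eq_zero (h : IsExactPair f g) : f * g = 0 :=
  (h.mul_right_eq_zero_iff f).2 (Ideal.mem_span_singleton_self f)

variable {F : Type*} [AddCommGroup F] [Module Q F] [Module.Flat Q F]

lemma exists_smul_eq_of_smul_eq_zero (h : IsExactPair f g) {v : F} (hv : f • v = 0) :
    ∃ u, g • u = v := by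
  obtain ⟨_, a, y, hay, haf⟩ := Module.Flat.isTrivialRelation_of_sum_smul_eq_zero
    (f := fun _ : Unit => f) (x := fun _ => v) (by simpa using hv)
  have ha (j) : ∃ c, a () j = g * c := by
    rw [← dvd_def, ← Ideal.mem_span_singleton, ← h.mul_left_eq_zero_iff, mul_comm]
    simpa using haf j
  choose c hc using ha
  exact ⟨∑ j, c j • y j, by simpa [hc, mul_smul, Finset.smul_sum] using (hay ()).symm⟩

lemma exists_map_add_smul_eq (h : IsExactPair f g) {D : Module.End Q F} (hD : D * D = 0)
    {y y' w : F} (hw : D w = f • y) (hy' : D y' = g • w) (hmem : ∃ z z', D z + g • z' = y') :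
    ∃ z z', D z + g • z' = y := by
  have D_D (z : F) : D (D z) = 0 := LinearMap.congr_fun hD z
  obtain ⟨z, z', rfl⟩ := hmem
  rw [map_add, D_D, zero_add, map_smul] at hy'
  obtain ⟨u, hu⟩ := h.symm.exists_smul_eq_of_smul_eq_zero (v := w - D z')
    (by rw [smul_sub, hy', sub_self])
  obtain ⟨u', hu'⟩ := h.exists_smul_eq_of_smul_eq_zero (v := y - D u)
    (by rw [smul_sub, ← hw, ← map_smul, hu, map_sub, D_D, sub_zero, sub_self])
  exact ⟨u, u', by rw [hu']; abel⟩

end IsExactPair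

variable {E : Type*} [AddCommGroup E] [Module Q E] [Module.Free Q E] {x : Module.Dual Q E}

open ExteriorAlgebra

lemma IsExactPair.koszulD_ne_smul_ι (h : IsExactPair f g) (hx : LinearMap.range x ≠ ⊤)
    (hg : g ∈ LinearMap.range x) {ε : E} (hε : x ε = f) {w : ExteriorAlgebra Q E}
    (hw : w ∈ ⋀[Q]^2 E) : koszulD x w ≠ g • ι Q ε := by
  intro hwε
  have := exteriorAlgebra_free (Q := Q) (E := E)
  obtain ⟨y, y_zero, koszulD_y, n, y_eq_zero⟩ := exists_dividedPowers x hw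
  have koszulD_ι_mul_y (k : ℕ) : koszulD x (ι Q ε * y k) = f • y k := by
    rw [koszulD_ι_mul, hε, sub_eq_self]
    cases k with
    | zero => rw [y_zero, koszulD_one, mul_zero]
    | succ k => rw [koszulD_y, hwε, smul_mul_assoc, mul_smul_comm, ← mul_assoc, ι_sq_zero,
        zero_mul, smul_zero]
  have koszulD_y_succ (k : ℕ) : koszulD x (y (k + 1)) = g • (ι Q ε * y k) := by
    rw [koszulD_y, hwε, smul_mul_assoc]
  obtain ⟨z, z', hz⟩ : ∃ z z', koszulD x z + g • z' = y 0 :=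
    Nat.decreasingInduction (motive := fun k _ => ∃ z z', koszulD x z + g • z' = y k)
      (fun k _ => h.exists_map_add_smul_eq (LinearMap.ext (koszulD_koszulD x))
        (koszulD_ι_mul_y k) (koszulD_y_succ k))
      ⟨0, 0, by rw [y_eq_zero n le_rfl, map_zero, smul_zero, add_zero]⟩ n.zero_le
  apply hx
  rw [Ideal.eq_top_iff_one, ← map_one (algebraMapInv (R := Q) (M := E)), ← y_zero, ← hz, map_add,
    map_smul]
  exact add_mem (algebraMapInv_koszulD_mem_range x z) (Ideal.mul_mem_right _ _ hg)

lemma IsExactPair.smul_notMem_range_smul_ker (h : IsExactPair f g) (hx : LinearMap.range x ≠ ⊤)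
    (hg : g ∈ LinearMap.range x) {ε : E} (hε : x ε = f) :
    g • ε ∉ LinearMap.range x • LinearMap.ker x := by
  intro hmem
  obtain ⟨w, hw, hwε⟩ := exists_koszulD_eq_ι x hmem
  exact h.koszulD_ne_smul_ι hx hg hε hw (by rw [hwε, map_smul])

end ExactPair

section LocalRing

open IsLocalRing

variable {A : Type u} [CommRing A] [IsLocalRing A]

lemma annihilator_residueField : Module.annihilator A (ResidueField A) = maximalIdeal A :=
  Ideal.annihilator_quotient

lemma length_residueField : Module.length A (ResidueField A) = 1 := by
  rw [Module.length_eq_of_surjective (S := A) (R := ResidueField A) residue_surjective,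
    Module.length_eq_one]

lemma exists_linearMap_residueField_eq_one {M : Type*} [AddCommGroup M] [Module A M] {y : M}
    (hy : y ∉ maximalIdeal A • (⊤ : Submodule A M)) :
    ∃ l : M →ₗ[A] ResidueField A, l y = 1 := by
  have tmul_ne_zero : (1 : ResidueField A) ⊗ₜ[A] y ≠ 0 := by
    intro h
    have hequiv : TensorProduct.quotTensorEquivQuotSMul M (maximalIdeal A) (1 ⊗ₜ[A] y) =
        Submodule.Quotient.mk y :=
      (TensorProduct.quotTensorEquivQuotSMul_mk_tmul _ 1 y).trans (by rw [one_smul])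
    have mk_eq_zero : (Submodule.Quotient.mk y : M ⧸ maximalIdeal A • (⊤ : Submodule A M)) = 0 :=
      hequiv.symm.trans ((congrArg _ h).trans (map_zero _))
    exact hy ((Submodule.Quotient.mk_eq_zero _).1 mk_eq_zero)
  obtain ⟨φ, hφ⟩ := Module.Projective.exists_dual_eq_one (ResidueField A) tmul_ne_zero
  exact ⟨φ.restrictScalars A ∘ₗ TensorProduct.mk A (ResidueField A) M 1, hφ⟩

lemma finrank_residueField_tensor {Y : Type*} [AddCommGroup Y] [Module A Y]
    (hY : maximalIdeal A ≤ Module.annihilator A Y) :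
    Module.finrank (ResidueField A) (ResidueField A ⊗[A] Y) = (Module.length A Y).toNat := by
  have smul_top : maximalIdeal A • (⊤ : Submodule A Y) = ⊥ := by
    rw [eq_bot_iff, Submodule.smul_le]
    exact fun a ha y _ => Module.mem_annihilator.1 (hY ha) y
  have e : (ResidueField A ⊗[A] Y) ≃ₗ[A] Y :=
    (TensorProduct.quotTensorEquivQuotSMul Y (maximalIdeal A)).trans
      (Submodule.quotEquivOfEqBot _ smul_top)
  rw [← e.length_eq, Module.length_eq_of_surjective (S := A) (R := ResidueField A)
    residue_surjective, Module.length_eq_rank, Module.finrank, Cardinal.toNat_toENat]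

lemma bettiNumber_eq_length_tor {A : Type} [CommRing A] [IsLocalRing A]
    (P : ProjectiveResolution (ModuleCat.of A (ResidueField A))) (M : Type) [AddCommGroup M]
    [Module A M] (n : ℕ) : bettiNumber A M n = (Module.length A (tor P n M)).toNat := by
  let e : ((Tor (ModuleCat A) n).obj (ModuleCat.of A M)).obj
      (ModuleCat.of A (ResidueField A)) ≃ₗ[A] tor P n M :=
    (torIso P n (ModuleCat.of A M)).toLinearEquiv
  rw [bettiNumber, finrank_residueField_tensor, e.length_eq]
  rw [e.annihilator_eq]
  exact annihilator_residueField.ge.trans (annihilator_le_annihilator_tor P n M)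

variable (P : ProjectiveResolution (ModuleCat.of A (ResidueField A)))

lemma length_tor_zero_self : Module.length A (tor P 0 A) = 1 :=
  ((torZeroEquiv P A).trans (TensorProduct.lid A (ResidueField A))).length_eq.trans
    length_residueField

lemma length_tor_succ_self (n : ℕ) : Module.length A (tor P (n + 1) A) = 0 :=
  have := subsingleton_tor_succ P n A
  Module.length_eq_zero

lemma torMap_residue_injective (n : ℕ) :
    Function.Injective (torMap P n (Algebra.linearMap A (ResidueField A))) := by
  cases n with
  | zero =>
    -- The multiplication `k ⊗ k → k` is a retraction of `A ⊗ k → k ⊗ k`.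
    have mul_comp_rTensor : LinearMap.mul' A (ResidueField A) ∘ₗ
        (Algebra.linearMap A (ResidueField A)).rTensor (ResidueField A) =
          (TensorProduct.lid A (ResidueField A)).toLinearMap := by
      ext
      simp
    have rTensor_injective : Function.Injective
        ((Algebra.linearMap A (ResidueField A)).rTensor (ResidueField A)) := by
      refine Function.Injective.of_comp (f := LinearMap.mul' A (ResidueField A)) ?_
      rw [← LinearMap.coe_comp, mul_comp_rTensor]
      exact (TensorProduct.lid A (ResidueField A)).injective
    refine Function.Injective.of_comp (f := torZeroEquiv P (ResidueField A)) ?_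
    rw [show _ ∘ _ = _ from funext (torZeroEquiv_torMap P (Algebra.linearMap A (ResidueField A)))]
    exact rTensor_injective.comp (torZeroEquiv P A).injective
  | succ n =>
    have := subsingleton_tor_succ P n A
    exact Function.injective_of_subsingleton _

section Cyclic

variable {M : Type u} [AddCommGroup M] [Module A M] {s : A →ₗ[A] M} {l : M →ₗ[A] ResidueField A}

lemma bijective_torMap_zero_of_cyclic (hs : Function.Surjective s)
    (hls : l ∘ₗ s = Algebra.linearMap A (ResidueField A)) :
    Function.Bijective (torMap P 0 s) :=
  ⟨torMap_injective_of_comp P (hls ▸ torMap_residue_injective P 0), torMap_zero_surjective P hs⟩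

lemma torMap_zero_injective_of_cyclic (hs : Function.Surjective s)
    (hls : l ∘ₗ s = Algebra.linearMap A (ResidueField A)) :
    Function.Injective (torMap P 0 l) := by
  have hinj := torMap_residue_injective P 0
  rw [← hls, torMap_comp, LinearMap.coe_comp] at hinj
  exact hinj.of_comp_right (torMap_zero_surjective P hs)

lemma length_tor_zero_of_cyclic (hs : Function.Surjective s)
    (hls : l ∘ₗ s = Algebra.linearMap A (ResidueField A)) :
    Module.length A (tor P 0 M) = 1 :=
  (LinearEquiv.ofBijective _ (bijective_torMap_zero_of_cyclic P hs hls)).length_eq.symm.trans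
    (length_tor_zero_self P)

end Cyclic

lemma exists_minimal_cover (M : Type*) [AddCommGroup M] [Module A M] [Module.Finite A M] :
    ∃ (b : ℕ) (v : (Fin b → A) →ₗ[A] M), Function.Surjective v ∧
      ∀ z ∈ LinearMap.ker v, ∀ j, z j ∈ maximalIdeal A := by
  let w := Module.finBasis (ResidueField A) (ResidueField A ⊗[A] M)
  obtain ⟨e, he⟩ := (TensorProduct.mk_surjective A M (ResidueField A)
    Ideal.Quotient.mk_surjective).comp_left w
  replace he (j) : (1 : ResidueField A) ⊗ₜ[A] e j = w j := congrFun he j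
  have span_e := IsLocalRing.span_eq_top_of_tmul_eq_basis e w he
  refine ⟨_, Fintype.linearCombination A e, ?_, fun z hz j => ?_⟩
  · rw [← LinearMap.range_eq_top, Fintype.range_linearCombination, span_e]
  · rw [LinearMap.mem_ker, Fintype.linearCombination_apply] at hz
    have sum_eq_zero : ∑ i, residue A (z i) • w i = 0 := calc
      _ = TensorProduct.mk A (ResidueField A) M 1 (∑ i, z i • e i) := by
        rw [map_sum]
        refine Finset.sum_congr rfl fun i _ => ?_
        rw [map_smul, TensorProduct.mk_apply, he]
        exact algebraMap_smul (ResidueField A) (z i) (w i)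
      _ = 0 := by rw [hz, map_zero]
    exact (residue_eq_zero_iff _).1
      (Fintype.linearIndependent_iff.1 w.linearIndependent _ sum_eq_zero j)

end LocalRing

section LargeHomomorphism

open IsLocalRing

variable {R : Type u} [CommRing R] [IsLocalRing R]
  (P' : ProjectiveResolution (ModuleCat.of R (ResidueField R)))
  {M : Type u} [AddCommGroup M] [Module R M]

section MinimalCover

variable {b : ℕ} {v : (Fin b → R) →ₗ[R] M} (hv : Function.Surjective v)
  (hmin : ∀ z ∈ LinearMap.ker v, ∀ j, z j ∈ maximalIdeal R)

include hv hmin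

lemma length_tor_zero_of_minimal_cover : Module.length R (tor P' 0 M) = b := by
  rw [(isShortExact_ker_subtype hv).length_tor_zero_of_cover P'
    (π := Algebra.linearMap R (ResidueField R))
    (LinearMap.ext fun z => funext fun j => (residue_eq_zero_iff _).2 (hmin z z.2 j))
    (torMap_residue_injective P' 0), length_tor_zero_self, mul_one]

lemma length_tor_succ_of_minimal_cover (n : ℕ) :
    Module.length R (tor P' (n + 1) M) = Module.length R (tor P' n (LinearMap.ker v)) := by
  rw [(isShortExact_ker_subtype hv).length_tor_succ_of_cover P'
    (π := Algebra.linearMap R (ResidueField R))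
    (LinearMap.ext fun z => funext fun j => (residue_eq_zero_iff _).2 (hmin z z.2 j))
    (torMap_residue_injective P') n, length_tor_succ_self, mul_zero, zero_add]

end MinimalCover

variable [IsNoetherianRing R]

lemma length_tor_ne_top (n : ℕ) (M : Type u) [AddCommGroup M] [Module R M] [Module.Finite R M] :
    Module.length R (tor P' n M) ≠ ⊤ := by
  induction n generalizing M with
  | zero =>
    obtain ⟨b, v, hv, hmin⟩ := exists_minimal_cover (A := R) M
    rw [length_tor_zero_of_minimal_cover P' hv hmin]
    exact ENat.natCast_ne_top b
  | succ n ih =>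
    obtain ⟨b, v, hv, hmin⟩ := exists_minimal_cover (A := R) M
    rw [length_tor_succ_of_minimal_cover P' hv hmin]
    exact ih (LinearMap.ker v)

/-- Levin's formula `P_M^Q = P_M^R * P_R^Q` for large homomorphisms `Q → R`. With `Y = X = k`, the
injectivity of `Tor(π, k)` is Levin's definition of largeness. -/
theorem length_tor_eq_sum_antidiagonal {Q Y : Type u} [CommRing Q] [Algebra Q R] [AddCommGroup Y]
    [Module Q Y] {X : ModuleCat.{u} Q} (P : ProjectiveResolution X) {π : R →ₗ[Q] Y}
    (hπ : ∀ n, Function.Injective (torMap P n π)) (hm : ∀ r ∈ maximalIdeal R, π r = 0) (n : ℕ)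
    (M : Type u) [AddCommGroup M] [Module Q M] [Module R M] [IsScalarTower Q R M]
    [Module.Finite R M] :
    Module.length Q (tor P n M) = ∑ p ∈ Finset.HasAntidiagonal.antidiagonal n,
      Module.length R (tor P' p.1 M) * Module.length Q (tor P p.2 R) := by
  induction n generalizing M with
  | zero =>
    obtain ⟨b, v, hv, hmin⟩ := exists_minimal_cover (A := R) M
    have hQ : IsShortExact ((LinearMap.ker v).subtype.restrictScalars Q) (v.restrictScalars Q) :=
      (isShortExact_ker_subtype hv).restrictScalars Q
    rw [hQ.length_tor_zero_of_cover P
      (LinearMap.ext fun z => funext fun j => hm _ (hmin z z.2 j)) (hπ 0),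
      Finset.Nat.antidiagonal_zero, Finset.sum_singleton,
      length_tor_zero_of_minimal_cover P' hv hmin]
  | succ n ih =>
    obtain ⟨b, v, hv, hmin⟩ := exists_minimal_cover (A := R) M
    have hQ : IsShortExact ((LinearMap.ker v).subtype.restrictScalars Q) (v.restrictScalars Q) :=
      (isShortExact_ker_subtype hv).restrictScalars Q
    rw [hQ.length_tor_succ_of_cover P
      (LinearMap.ext fun z => funext fun j => hm _ (hmin z z.2 j)) hπ, ih (LinearMap.ker v),
      Finset.Nat.sum_antidiagonal_succ, length_tor_zero_of_minimal_cover P' hv hmin]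
    simp only [length_tor_succ_of_minimal_cover P' hv hmin]

end LargeHomomorphism

section QuotientBySpanSingleton

variable {Q : Type u} [CommRing Q] {f g : Q}

/-- The map `Q/(f) → N` with `1 ↦ y`, for an element `y` killed by `f`. -/
def quotientToSpanSingleton {N : Type*} [AddCommGroup N] [Module Q N] (y : N) (hy : f • y = 0) :
    Q ⧸ Ideal.span {f} →ₗ[Q] N :=
  Submodule.liftQSpanSingleton f (LinearMap.toSpanSingleton Q N y) hy

/-- Multiplication by `f`, as a map from `Q` onto the ideal `(f)`. -/
def mulToSpanSingleton (f : Q) : Q →ₗ[Q] Ideal.span {f} :=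
  LinearMap.toSpanSingleton Q _ ⟨f, Ideal.mem_span_singleton_self f⟩

lemma mulToSpanSingleton_surjective (f : Q) : Function.Surjective (mulToSpanSingleton f) := by
  rintro ⟨y, hy⟩
  obtain ⟨a, rfl⟩ := Ideal.mem_span_singleton'.1 hy
  exact ⟨a, rfl⟩

lemma IsExactPair.isShortExact (h : IsExactPair f g) :
    IsShortExact (quotientToSpanSingleton g h.mul_eq_zero) (mulToSpanSingleton f) where
  injective := by
    rw [injective_iff_map_eq_zero]
    intro r hr
    obtain ⟨q, rfl⟩ := Submodule.Quotient.mk_surjective _ r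
    exact (Submodule.Quotient.mk_eq_zero _).2 ((h.mul_right_eq_zero_iff q).1 hr)
  exact q := by
    have mul_eq_zero_iff : mulToSpanSingleton f q = 0 ↔ q * f = 0 := Subtype.ext_iff
    rw [mul_eq_zero_iff, h.mul_left_eq_zero_iff, Ideal.mem_span_singleton', Set.mem_range,
      (Submodule.Quotient.mk_surjective _).exists]
    rfl
  surjective := mulToSpanSingleton_surjective f

variable [IsLocalRing Q] (P : ProjectiveResolution (ModuleCat.of Q (IsLocalRing.ResidueField Q)))

open IsLocalRing

/-- The projection `Q/(f) → k`, for `f ∈ m`. -/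
noncomputable def quotientToResidueField (hfm : f ∈ maximalIdeal Q) :
    Q ⧸ Ideal.span {f} →ₗ[Q] ResidueField Q :=
  quotientToSpanSingleton 1 <| by
    rw [Algebra.smul_def, mul_one]
    exact (residue_eq_zero_iff f).2 hfm

lemma quotientToResidueField_comp_mkQ (hfm : f ∈ maximalIdeal Q) :
    quotientToResidueField hfm ∘ₗ Submodule.mkQ _ = Algebra.linearMap Q (ResidueField Q) :=
  LinearMap.ext_ring (one_smul Q 1)

lemma quotientToResidueField_eq_zero [IsLocalRing (Q ⧸ Ideal.span {f})]
    (hfm : f ∈ maximalIdeal Q) {r : Q ⧸ Ideal.span {f}} (hr : r ∈ maximalIdeal _) :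
    quotientToResidueField hfm r = 0 := by
  obtain ⟨q, rfl⟩ := Ideal.Quotient.mk_surjective r
  have hq : q ∈ maximalIdeal Q := fun hunit => hr (hunit.map _)
  exact (LinearMap.congr_fun (quotientToResidueField_comp_mkQ hfm) q).trans
    ((residue_eq_zero_iff q).2 hq)

/-- The inclusion of `(f)` into the maximal ideal, for `f ∈ m`. -/
def spanSingletonInclusion (hfm : f ∈ maximalIdeal Q) : Ideal.span {f} →ₗ[Q] maximalIdeal Q :=
  Submodule.inclusion ((Ideal.span_singleton_le_iff_mem _).2 hfm)

lemma exists_comp_spanSingletonInclusion (hfm : f ∈ maximalIdeal Q)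
    (hfm2 : f ∉ maximalIdeal Q ^ 2) :
    ∃ l : maximalIdeal Q →ₗ[Q] ResidueField Q, (l ∘ₗ spanSingletonInclusion hfm) ∘ₗ
      mulToSpanSingleton f = Algebra.linearMap Q (ResidueField Q) := by
  obtain ⟨l, hl⟩ := exists_linearMap_residueField_eq_one (y := (⟨f, hfm⟩ : maximalIdeal Q)) <| by
    intro hmem
    apply hfm2
    have := Submodule.mem_map_of_mem (f := (maximalIdeal Q).subtype) hmem
    rwa [Submodule.map_smul'', Submodule.map_top, Submodule.range_subtype, smul_eq_mul,
      ← pow_two] at this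
  refine ⟨l, LinearMap.ext_ring ?_⟩
  change l (spanSingletonInclusion hfm ((1 : Q) • _)) = _
  rw [one_smul, Algebra.linearMap_apply, map_one]
  exact hl

/-- The map onto `m` from the free module on all elements of `m`. It need not be minimal, and `m`
need not be finitely generated. -/
noncomputable abbrev freeCover (Q : Type u) [CommRing Q] [IsLocalRing Q] :
    (maximalIdeal Q →₀ Q) →ₗ[Q] maximalIdeal Q :=
  Finsupp.linearCombination Q id

namespace IsExactPair

lemma exists_linearMap_ker_freeCover (h : IsExactPair f g) (hfm : f ∈ maximalIdeal Q)
    (hgm : g ∈ maximalIdeal Q) {ε : maximalIdeal Q →₀ Q} (hε : freeCover Q ε = ⟨f, hfm⟩)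
    (hker : g • ε ∈ LinearMap.ker (freeCover Q)) :
    ∃ l : LinearMap.ker (freeCover Q) →ₗ[Q] ResidueField Q, l ⟨g • ε, hker⟩ = 1 := by
  refine exists_linearMap_residueField_eq_one
    (y := (⟨g • ε, hker⟩ : LinearMap.ker (freeCover Q))) fun hmem => ?_
  let x := (maximalIdeal Q).subtype ∘ₗ freeCover Q
  have range_x : LinearMap.range x = maximalIdeal Q := by
    rw [LinearMap.range_comp_of_range_eq_top _ (LinearMap.range_eq_top.2
      (Finsupp.linearCombination_surjective Q Function.surjective_id)), Submodule.range_subtype]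
  have ker_x : LinearMap.ker x = LinearMap.ker (freeCover Q) :=
    LinearMap.ker_comp_of_ker_eq_bot _ (Submodule.ker_subtype _)
  refine h.smul_notMem_range_smul_ker (x := x) (ε := ε) ?_ ?_ (congrArg Subtype.val hε) ?_
  · rw [range_x]
    exact (maximalIdeal.isMaximal Q).ne_top
  · rwa [range_x]
  · rw [range_x, ker_x]
    have := Submodule.mem_map_of_mem (f := (LinearMap.ker (freeCover Q)).subtype) hmem
    rwa [Submodule.map_smul'', Submodule.map_top, Submodule.range_subtype] at this

variable (h : IsExactPair f g) (hfm : f ∈ maximalIdeal Q) (hgm : g ∈ maximalIdeal Q)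

include h hgm

lemma torMap_succ_spanSingletonInclusion_injective {n : ℕ}
    (hn : Function.Injective (torMap P n (quotientToResidueField hfm))) :
    Function.Injective (torMap P (n + 1) (spanSingletonInclusion hfm)) := by
  let ε : maximalIdeal Q →₀ Q := Finsupp.single ⟨f, hfm⟩ 1
  have hε : freeCover Q ε = ⟨f, hfm⟩ := by
    rw [Finsupp.linearCombination_single, one_smul, id]
  have hker : g • ε ∈ LinearMap.ker (freeCover Q) := by
    rw [LinearMap.mem_ker, map_smul, hε, Subtype.ext_iff]
    exact h.symm.mul_eq_zero
  obtain ⟨l, hl⟩ := h.exists_linearMap_ker_freeCover hfm hgm hε hker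
  -- `ρ` lifts the inclusion `(f) ⊆ m` to first syzygies.
  let ρ := quotientToSpanSingleton (f := f) (⟨g • ε, hker⟩ : LinearMap.ker (freeCover Q)) <|
    Subtype.ext <| show f • g • ε = 0 by rw [← mul_smul, h.mul_eq_zero, zero_smul]
  have l_comp_ρ : l ∘ₗ ρ = quotientToResidueField hfm := by
    refine Submodule.linearMap_qext _ (LinearMap.ext_ring ?_)
    change l ((1 : Q) • _) = (1 : Q) • 1
    rw [one_smul, one_smul, hl]
  refine h.isShortExact.torMap_succ_injective P
    (isShortExact_ker_subtype (Finsupp.linearCombination_surjective Q Function.surjective_id))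
    (a := ρ) (b := LinearMap.toSpanSingleton Q _ ε) ?_ ?_
    (torMap_injective_of_comp P (ψ := l) (l_comp_ρ ▸ hn))
  · refine Submodule.linearMap_qext _ (LinearMap.ext_ring ?_)
    change (1 : Q) • g • ε = ((1 : Q) • g) • ε
    rw [one_smul, one_smul]
  · refine LinearMap.ext_ring ?_
    change freeCover Q ((1 : Q) • ε) = spanSingletonInclusion hfm ((1 : Q) • _)
    rw [one_smul, one_smul, hε]
    rfl

end IsExactPair

lemma torMap_succ_quotientToResidueField_injective (hfm : f ∈ maximalIdeal Q) {n : ℕ}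
    (hn : Function.Injective (torMap P n (spanSingletonInclusion hfm))) :
    Function.Injective (torMap P (n + 1) (quotientToResidueField hfm)) :=
  (isShortExact_subtype_mkQ (Ideal.span {f})).torMap_succ_injective P
    (isShortExact_subtype_mkQ (maximalIdeal Q)) (b := LinearMap.id) rfl
    (quotientToResidueField_comp_mkQ hfm).symm hn

namespace IsExactPair

variable (h : IsExactPair f g) (hfm : f ∈ maximalIdeal Q) (hgm : g ∈ maximalIdeal Q)
  (hfm2 : f ∉ maximalIdeal Q ^ 2)

include h hgm hfm2

lemma torMap_injective (n : ℕ) :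
    Function.Injective (torMap P n (quotientToResidueField hfm)) ∧
      Function.Injective (torMap P n (spanSingletonInclusion hfm)) := by
  induction n with
  | zero =>
    obtain ⟨l, hl⟩ := exists_comp_spanSingletonInclusion hfm hfm2
    exact ⟨torMap_zero_injective_of_cyclic P (Submodule.mkQ_surjective _)
        (quotientToResidueField_comp_mkQ hfm),
      torMap_injective_of_comp P
        (torMap_zero_injective_of_cyclic P (mulToSpanSingleton_surjective f) hl)⟩
  | succ n ih =>
    exact ⟨torMap_succ_quotientToResidueField_injective P hfm ih.2,
      h.torMap_succ_spanSingletonInclusion_injective P hfm hgm ih.1⟩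

include hfm

lemma length_tor (n : ℕ) :
    Module.length Q (tor P n (Q ⧸ Ideal.span {f})) = 1 ∧
      Module.length Q (tor P n (Ideal.span {f})) = 1 := by
  induction n with
  | zero =>
    obtain ⟨l, hl⟩ := exists_comp_spanSingletonInclusion hfm hfm2
    exact ⟨length_tor_zero_of_cyclic P (Submodule.mkQ_surjective _)
        (quotientToResidueField_comp_mkQ hfm),
      length_tor_zero_of_cyclic P (mulToSpanSingleton_surjective f) hl⟩
  | succ n ih =>
    have smul_top : Module.annihilator Q (ResidueField Q) • (⊤ : Ideal Q) = maximalIdeal Q := by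
      rw [annihilator_residueField, smul_eq_mul, Ideal.mul_top]
    rw [(isShortExact_subtype_mkQ (Ideal.span {f})).length_tor_succ_of_minimal P,
      h.isShortExact.length_tor_succ_of_minimal P]
    · exact ih.symm
    · rw [smul_top]
      rintro _ ⟨r, rfl⟩
      obtain ⟨q, rfl⟩ := Submodule.Quotient.mk_surjective _ r
      exact Ideal.mul_mem_left _ q hgm
    · rw [smul_top, Submodule.range_subtype]
      exact (Ideal.span_singleton_le_iff_mem _).2 hfm

end IsExactPair

end QuotientBySpanSingleton

theorem betti_base_eq_sum_of_exact_zerodivisor_not_mem_sq_general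
    (Q : Type) [CommRing Q] [IsLocalRing Q] {f g : Q} (h : IsExactPair f g)
    (hfm : f ∈ IsLocalRing.maximalIdeal Q) (hgm : g ∈ IsLocalRing.maximalIdeal Q)
    (hfm2 : f ∉ (IsLocalRing.maximalIdeal Q) ^ 2)
    [IsLocalRing (Q ⧸ Ideal.span {f})] [IsNoetherianRing (Q ⧸ Ideal.span {f})]
    (M : Type) [AddCommGroup M] [Module Q M] [Module (Q ⧸ Ideal.span {f}) M]
    [IsScalarTower Q (Q ⧸ Ideal.span {f}) M]
    [Module.Finite (Q ⧸ Ideal.span {f}) M]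
    (i : ℕ) :
    bettiNumber Q M i =
      ∑ j ∈ Finset.range (i + 1), bettiNumber (Q ⧸ Ideal.span {f}) M j := by
  let P := projectiveResolution (ModuleCat.of Q (IsLocalRing.ResidueField Q))
  let P' := projectiveResolution
    (ModuleCat.of (Q ⧸ Ideal.span {f}) (IsLocalRing.ResidueField (Q ⧸ Ideal.span {f})))
  have length_tor_eq_sum : Module.length Q (tor P i M) =
      ∑ j ∈ Finset.range (i + 1), Module.length (Q ⧸ Ideal.span {f}) (tor P' j M) := by
    rw [length_tor_eq_sum_antidiagonal P' P
      (fun n => (h.torMap_injective P hfm hgm hfm2 n).1)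
      (fun _ => quotientToResidueField_eq_zero hfm)]
    simp only [(h.length_tor P hfm hgm hfm2 _).1, mul_one]
    exact Finset.Nat.sum_antidiagonal_eq_sum_range_succ_mk _ i
  rw [bettiNumber_eq_length_tor P, length_tor_eq_sum,
    ENat.toNat_sum fun j _ => length_tor_ne_top P' j M]
  simp only [bettiNumber_eq_length_tor P']

/-- Let `f, g` be an exact pair of zerodivisors in the maximal ideal `m` of a
Noetherian local ring `Q` with `f ∉ m²`, and set `R = Q/(f)`. Then for every
finitely generated `R`-module `M` and all `i ≥ 0`,
`β_i^Q(M) = ∑_{j=0}^{i} β_j^R(M)`, i.e. `P_M^Q(t) = P_M^R(t)/(1−t)`. -/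
theorem betti_base_eq_sum_of_exact_zerodivisor_not_mem_sq
    (Q : Type) [CommRing Q] [IsNoetherianRing Q] [IsLocalRing Q]
    (f g : Q) (hf0 : f ≠ 0) (hg0 : g ≠ 0)
    (hfm : f ∈ IsLocalRing.maximalIdeal Q) (hgm : g ∈ IsLocalRing.maximalIdeal Q)
    (hfm2 : f ∉ (IsLocalRing.maximalIdeal Q) ^ 2)
    (hannf : ∀ x : Q, x * f = 0 ↔ x ∈ Ideal.span {g})
    (hanng : ∀ x : Q, x * g = 0 ↔ x ∈ Ideal.span {f})
    [IsLocalRing (Q ⧸ Ideal.span {f})]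
    (M : Type) [AddCommGroup M] [Module Q M] [Module (Q ⧸ Ideal.span {f}) M]
    [IsScalarTower Q (Q ⧸ Ideal.span {f}) M]
    [Module.Finite (Q ⧸ Ideal.span {f}) M]
    (i : ℕ) :
    bettiNumber Q M i =
      ∑ j ∈ Finset.range (i + 1), bettiNumber (Q ⧸ Ideal.span {f}) M j :=
  betti_base_eq_sum_of_exact_zerodivisor_not_mem_sq_general Q ⟨hannf, hanng⟩ hfm hgm hfm2 M i
end

section
/- Let (Q, m, k) be a commutative Noetherian local ring, let f ∈ m ∖ m² be a Q-regular element (a nonzerodivisor), and set R = Q/(f). Then for every finitely generated R-module M and every integer i ≥ 0 one has β_i^Q(M) = β_i^R(M) + β_{i−1}^R(M) (with the convention β_{−1}^R(M) = 0). (Equivalently, P_M^Q(t) = (1+t)·P_M^R(t); this is the case n = 1 of Nagata's equality, recovered from the dg Koszul-complex theorem.) -/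
open CategoryTheory TensorProduct

/-!
Write `k` for the common residue field of `Q` and `R`. Shifting dimensions along
`0 → m_Q → Q → k → 0` replaces `Tor^Q(M, k)` by `Tor^Q(M, m_Q)` in one degree less. Since `f` is
regular on `Q` and on `m_Q`, the modules `R` and `m_Q` are Tor-independent over `Q`, so that
`Tor^Q(M, m_Q) = Tor^R(M, R ⊗ m_Q)`. As `f ∉ m_Q²`, there is a map `m_Q → k` sending `f` to `1`,
and together with `m_Q → m_R` it gives `R ⊗ m_Q = m_Q / f m_Q ≅ k × m_R`. The factor `k`
contributes `Tor^R(M, k)` in the shifted degree, and the factor `m_R` contributes `Tor^R(M, k)` in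
the original degree, by shifting back along `0 → m_R → R → k → 0`.
-/

universe u

section LeftDerived

open Limits

variable {C : Type*} [Category* C] [Abelian C]

/-- The augmentation `P₀ ⟶ X` of a projective resolution of `X`, with target `X` itself rather than
the degree `0` term of the complex concentrated in degree `0`. -/
noncomputable def resolutionAugmentation {X : C} (P : ProjectiveResolution X) :
    P.complex.X 0 ⟶ X :=
  (ChainComplex.toSingle₀Equiv _ _ P.π).1

lemma d_comp_resolutionAugmentation {X : C} (P : ProjectiveResolution X) :
    P.complex.d 1 0 ≫ resolutionAugmentation P = 0 :=
  (ChainComplex.toSingle₀Equiv _ _ P.π).2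

/-- A resolution is exact at `P₀`, in the strong form that its augmentation is the cokernel of
`P₁ ⟶ P₀`. -/
noncomputable def isColimitResolutionAugmentation {X : C} (P : ProjectiveResolution X) :
    IsColimit (CokernelCofork.ofπ _ (d_comp_resolutionAugmentation P)) :=
  P.isColimitCokernelCofork

instance {X : C} (P : ProjectiveResolution X) : Epi (resolutionAugmentation P) :=
  epi_of_isColimit_cofork (isColimitResolutionAugmentation P)

lemma exact_resolutionAugmentation {X : C} (P : ProjectiveResolution X) :
    (ShortComplex.mk _ _ (d_comp_resolutionAugmentation P)).Exact :=
  ShortComplex.exact_of_g_is_cokernel _ (isColimitResolutionAugmentation P)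

lemma quasiIso_toSingle₀_of_exact {K : ChainComplex C ℕ} {Z : C} (ε : K.X 0 ⟶ Z)
    (w : K.d 1 0 ≫ ε = 0) (hε : (ShortComplex.mk _ _ w).Exact) (hε' : Epi ε)
    (hK : ∀ n, K.ExactAt (n + 1)) :
    QuasiIso ((ChainComplex.toSingle₀Equiv K Z).symm ⟨ε, w⟩) where
  quasiIsoAt
    | 0 => by
      rw [ChainComplex.quasiIsoAt₀_iff,
        ShortComplex.quasiIso_iff_of_zeros' _ (K.shape _ _ (by simp)) (by rfl) (by rfl)]
      refine (ShortComplex.exact_and_epi_g_iff_of_iso ?_).2 ⟨hε, hε'⟩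
      exact ShortComplex.isoMk (Iso.refl _) (Iso.refl _) (Iso.refl _)
        ((Category.id_comp _).trans (Category.comp_id _).symm)
        ((Category.id_comp _).trans (Eq.trans
          (ChainComplex.toSingle₀Equiv_symm_apply_f_zero ε w).symm (Category.comp_id _).symm))
    | n + 1 => by
      rw [quasiIsoAt_iff_exactAt' _ _ (ChainComplex.exactAt_succ_single_obj _ _)]
      exact hK n

section Splice

variable {S : ShortComplex C} (hS : S.ShortExact) (P : ProjectiveResolution S.X₁)

lemma d_comp_augmentation_comp_f :
    P.complex.d 1 0 ≫ resolutionAugmentation P ≫ S.f = 0 := by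
  rw [← Category.assoc, d_comp_resolutionAugmentation, zero_comp]

variable (S) in
/-- The complex `⋯ ⟶ P₁ ⟶ P₀ ⟶ X₂` spliced from a resolution `P` of `X₁` and `X₁ ⟶ X₂`. -/
noncomputable abbrev spliceComplex : ChainComplex C ℕ :=
  P.complex.augment (resolutionAugmentation P ≫ S.f) (d_comp_augmentation_comp_f P)

lemma spliceComplex_d_comp_g : (spliceComplex S P).d 1 0 ≫ S.g = 0 :=
  show (resolutionAugmentation P ≫ S.f) ≫ S.g = 0 by simp

lemma spliceComplex_exact (hS : S.ShortExact) :
    (ShortComplex.mk _ _ (spliceComplex_d_comp_g P)).Exact := by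
  let φ : ShortComplex.mk _ _ (spliceComplex_d_comp_g P) ⟶ S :=
    { τ₁ := resolutionAugmentation P, τ₂ := 𝟙 _, τ₃ := 𝟙 _ }
  have : Epi φ.τ₁ := inferInstanceAs (Epi (resolutionAugmentation P))
  have : IsIso φ.τ₂ := inferInstanceAs (IsIso (𝟙 _))
  have : Mono φ.τ₃ := inferInstanceAs (Mono (𝟙 _))
  exact (ShortComplex.exact_iff_of_epi_of_isIso_of_mono φ).2 hS.exact

lemma spliceComplex_exactAt_succ [Mono S.f] (n : ℕ) : (spliceComplex S P).ExactAt (n + 1) := by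
  rw [HomologicalComplex.exactAt_iff' _ (n + 2) (n + 1) n (by simp) (by simp)]
  match n with
  | 0 =>
    let φ : ShortComplex.mk _ _ (d_comp_resolutionAugmentation P) ⟶
        ShortComplex.mk _ _ (d_comp_augmentation_comp_f P) :=
      { τ₁ := 𝟙 _, τ₂ := 𝟙 _, τ₃ := S.f }
    have : Epi φ.τ₁ := inferInstanceAs (Epi (𝟙 _))
    have : IsIso φ.τ₂ := inferInstanceAs (IsIso (𝟙 _))
    have : Mono φ.τ₃ := inferInstanceAs (Mono S.f)
    exact (ShortComplex.exact_iff_of_epi_of_isIso_of_mono φ).1 (exact_resolutionAugmentation P)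
  | n + 1 => exact P.exact_succ n

/-- The projective resolution of `X₃` spliced from a resolution of `X₁` along a short exact
sequence `0 ⟶ X₁ ⟶ X₂ ⟶ X₃ ⟶ 0` with projective middle term. -/
noncomputable def spliceResolution [Projective S.X₂] : ProjectiveResolution S.X₃ :=
  have := hS.mono_f
  { complex := spliceComplex S P
    projective
      | 0 => inferInstanceAs (Projective S.X₂)
      | n + 1 => P.projective n
    π := (ChainComplex.toSingle₀Equiv _ _).symm ⟨S.g, spliceComplex_d_comp_g P⟩
    quasiIso := quasiIso_toSingle₀_of_exact S.g _ (spliceComplex_exact P hS) hS.epi_g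
      (spliceComplex_exactAt_succ P) }

variable {D : Type*} [Category* D] [Abelian D]

/-- The homology of `X₁ ⟶ X₂ ⟶ X₃` is the kernel of the morphism `g` that `X₂ ⟶ X₃` induces on a
cokernel `c` of `X₁ ⟶ X₂`. -/
noncomputable def homologyIsoKernelOfIsCokernel (T : ShortComplex D) {c : CokernelCofork T.f}
    (hc : IsColimit c) (g : c.pt ⟶ T.X₃) (hg : c.π ≫ g = T.g) : T.homology ≅ kernel g :=
  T.homologyIsoKernelDesc ≪≫
    kernel.mapIso _ _ ((cokernelIsCokernel T.f).coconePointUniqueUpToIso hc) (Iso.refl _) (by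
      rw [← cancel_epi (cokernel.π T.f)]
      have : cokernel.π T.f ≫ ((cokernelIsCokernel T.f).coconePointUniqueUpToIso hc).hom = c.π :=
        (cokernelIsCokernel T.f).comp_coconePointUniqueUpToIso_hom hc .one
      simp [reassoc_of% this, hg])

variable (G : C ⥤ D) [G.Additive]

/-- Above degree `1`, the homology of the image of a spliced complex is that of the image of the
original resolution, one degree lower. -/
noncomputable def mapSpliceComplexHomologySuccIso (n : ℕ) :
    ((G.mapHomologicalComplex _).obj (spliceComplex S P)).homology (n + 2) ≅
      ((G.mapHomologicalComplex _).obj P.complex).homology (n + 1) :=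
  ShortComplex.homologyMapIso
    (HomologicalComplex.isoSc' _ (n + 3) (n + 2) (n + 1) (by simp) (by simp) ≪≫
      (HomologicalComplex.isoSc' ((G.mapHomologicalComplex _).obj P.complex)
        (n + 2) (n + 1) n (by simp) (by simp)).symm)

/-- At the splicing point, the homology of the image of a spliced complex under a right exact
functor `G` is `ker (G X₁ ⟶ G X₂)`. -/
noncomputable def mapSpliceComplexHomologyOneIso [PreservesFiniteColimits G] :
    ((G.mapHomologicalComplex _).obj (spliceComplex S P)).homology 1 ≅ kernel (G.map S.f) :=
  ShortComplex.homologyMapIso (HomologicalComplex.isoSc' _ 2 1 0 (by simp) (by simp)) ≪≫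
    homologyIsoKernelOfIsCokernel (((G.mapHomologicalComplex _).obj (spliceComplex S P)).sc' 2 1 0)
      (CokernelCofork.mapIsColimit _ (isColimitResolutionAugmentation P) G) (G.map S.f)
      (G.map_comp _ _).symm

variable [HasProjectiveResolutions C] [Projective S.X₂]

/-- Dimension shifting `L_{n+2} G (X₃) ≅ L_{n+1} G (X₁)` along `0 ⟶ X₁ ⟶ X₂ ⟶ X₃ ⟶ 0` with
projective middle term. -/
noncomputable def leftDerivedDimensionShift (n : ℕ) :
    (G.leftDerived (n + 2)).obj S.X₃ ≅ (G.leftDerived (n + 1)).obj S.X₁ :=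
  let P := projectiveResolution S.X₁
  (spliceResolution hS P).isoLeftDerivedObj G (n + 2) ≪≫
    mapSpliceComplexHomologySuccIso P G n ≪≫ (P.isoLeftDerivedObj G (n + 1)).symm

/-- The bottom step of dimension shifting: `L₁ G (X₃)` is the kernel of `G X₁ ⟶ G X₂`. -/
noncomputable def leftDerivedOneIsoKernel [PreservesFiniteColimits G] :
    (G.leftDerived 1).obj S.X₃ ≅ kernel (G.map S.f) :=
  let P := projectiveResolution S.X₁
  (spliceResolution hS P).isoLeftDerivedObj G 1 ≪≫ mapSpliceComplexHomologyOneIso P G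

end Splice

section Additive

variable {D : Type*} [Category* D] [Abelian D] [HasProjectiveResolutions C]

instance leftDerived_additive (G : C ⥤ D) [G.Additive] (n : ℕ) : (G.leftDerived n).Additive where
  map_add {X Y f g} := by
    let P := projectiveResolution X
    let P' := projectiveResolution Y
    have lift_comm (h : X ⟶ Y) := ProjectiveResolution.lift_commutes h P P'
    have hfg : (ProjectiveResolution.lift f P P' + ProjectiveResolution.lift g P P') ≫ P'.π =
        P.π ≫ (ChainComplex.single₀ C).map (f + g) := by
      rw [Preadditive.add_comp, lift_comm, lift_comm, Functor.map_add, Preadditive.comp_add]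
    rw [G.leftDerived_map_eq n f _ (lift_comm f), G.leftDerived_map_eq n g _ (lift_comm g),
      G.leftDerived_map_eq n (f + g) _ hfg, Functor.map_add, Preadditive.add_comp,
      Preadditive.comp_add]

end Additive

end LeftDerived

/-- `0 → K → F → N → 0`, with maps `ι` and `π`, is a short exact sequence of modules. -/
structure IsShortExact_s15 {A K F N : Type*} [CommRing A] [AddCommGroup K] [Module A K]
    [AddCommGroup F] [Module A F] [AddCommGroup N] [Module A N]
    (ι : K →ₗ[A] F) (π : F →ₗ[A] N) : Prop where
  injective : Function.Injective ι
  surjective : Function.Surjective π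
  exact : Function.Exact ι π

lemma isShortExact_ker_subtype_s15 {A F N : Type*} [CommRing A] [AddCommGroup F] [Module A F]
    [AddCommGroup N] [Module A N] {π : F →ₗ[A] N} (hπ : Function.Surjective π) :
    IsShortExact_s15 π.ker.subtype π :=
  ⟨π.ker.injective_subtype, hπ, π.exact_subtype_ker_map⟩

section Tor

open Limits MonoidalCategory

/-- `Tor_n^A(M, N)` for unbundled modules. -/
noncomputable abbrev torModule (A : Type u) [CommRing A] (n : ℕ) (M N : Type u)
    [AddCommGroup M] [Module A M] [AddCommGroup N] [Module A N] : ModuleCat.{u} A :=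
  ((Tor (ModuleCat.{u} A) n).obj (ModuleCat.of A M)).obj (ModuleCat.of A N)

namespace torModule

variable {A : Type u} [CommRing A] (M : Type u) [AddCommGroup M] [Module A M]
  {N N₂ K F : Type u} [AddCommGroup N] [Module A N] [AddCommGroup N₂] [Module A N₂]
  [AddCommGroup K] [Module A K] [AddCommGroup F] [Module A F]

instance : PreservesFiniteColimits ((tensoringLeft (ModuleCat A)).obj (ModuleCat.of A M)) :=
  inferInstanceAs (PreservesFiniteColimits (tensorLeft (ModuleCat.of A M)))

instance (n : ℕ) : ((Tor (ModuleCat.{u} A) n).obj (ModuleCat.of A M)).Additive :=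
  leftDerived_additive _ n

variable (A N) in
/-- `Tor_0^A(M, N) = M ⊗ N`. -/
noncomputable def zeroEquiv : torModule A 0 M N ≃ₗ[A] M ⊗[A] N :=
  (((tensoringLeft _).obj (ModuleCat.of A M)).leftDerivedZeroIsoSelf.app
    (ModuleCat.of A N)).toLinearEquiv

/-- Functoriality of `Tor_n^A(M, -)` for linear equivalences. -/
noncomputable def congr (n : ℕ) (e : N ≃ₗ[A] N₂) : torModule A n M N ≃ₗ[A] torModule A n M N₂ :=
  (((Tor (ModuleCat A) n).obj (ModuleCat.of A M)).mapIso e.toModuleIso).toLinearEquiv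

variable (A N N₂) in
/-- `Tor_n^A(M, -)` commutes with binary products. -/
noncomputable def prodEquiv (n : ℕ) :
    torModule A n M (N × N₂) ≃ₗ[A] torModule A n M N × torModule A n M N₂ :=
  have := preservesBinaryBiproducts_of_preservesBiproducts
    ((Tor (ModuleCat A) n).obj (ModuleCat.of A M))
  (((Tor (ModuleCat A) n).obj (ModuleCat.of A M)).mapIso
      (ModuleCat.biprodIsoProd (ModuleCat.of A N) (ModuleCat.of A N₂)).symm ≪≫
    ((Tor (ModuleCat A) n).obj (ModuleCat.of A M)).mapBiprod _ _ ≪≫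
    ModuleCat.biprodIsoProd _ _).toLinearEquiv

lemma shortExact_shortComplex {ι : K →ₗ[A] F} {π : F →ₗ[A] N} (h : IsShortExact_s15 ι π) :
    (ModuleCat.shortComplexOfCompEqZero ι π h.exact.linearMap_comp_eq_zero).ShortExact :=
  ModuleCat.shortComplex_shortExact _ h.exact h.injective h.surjective

section DimensionShift

variable {ι : K →ₗ[A] F} {π : F →ₗ[A] N} (h : IsShortExact_s15 ι π) [Module.Projective A F]

/-- Dimension shifting in the second argument along `0 → K → F → N → 0` with `F` projective. -/
noncomputable def dimensionShift (n : ℕ) :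
    torModule A (n + 2) M N ≃ₗ[A] torModule A (n + 1) M K :=
  have : Projective (ModuleCat.of A F) := (IsProjective.iff_projective F).1 inferInstance
  (leftDerivedDimensionShift (shortExact_shortComplex h)
    ((tensoringLeft _).obj (ModuleCat.of A M)) n).toLinearEquiv

/-- The bottom step of dimension shifting: `Tor_1^A(M, N) = ker (M ⊗ K → M ⊗ F)`. -/
noncomputable def oneEquivKer :
    torModule A 1 M N ≃ₗ[A] LinearMap.ker (ι.lTensor M) :=
  have : Projective (ModuleCat.of A F) := (IsProjective.iff_projective F).1 inferInstance
  (leftDerivedOneIsoKernel (shortExact_shortComplex h)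
    ((tensoringLeft _).obj (ModuleCat.of A M)) ≪≫ ModuleCat.kernelIsoKer _).toLinearEquiv

end DimensionShift

lemma finite [IsNoetherianRing A] [Module.Finite A M] [Module.Finite A N] (n : ℕ) :
    Module.Finite A (torModule A n M N) := by
  induction n using Nat.twoStepInduction generalizing N with
  | zero => exact Module.Finite.equiv (zeroEquiv A M N).symm
  | one =>
    obtain ⟨r, π, hπ⟩ := Module.Finite.exists_fin' A N
    exact Module.Finite.equiv (oneEquivKer M (isShortExact_ker_subtype_s15 hπ)).symm
  | more n _ ih =>
    obtain ⟨r, π, hπ⟩ := Module.Finite.exists_fin' A N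
    have := ih (N := π.ker)
    exact Module.Finite.equiv (dimensionShift M (isShortExact_ker_subtype_s15 hπ) n).symm

end torModule

end Tor

section KerLTensor

open LinearMap

section BaseChange

variable {Q : Type*} (R M : Type*) {K F : Type*} [CommRing Q] [CommRing R] [Algebra Q R]
  [AddCommGroup M] [Module Q M] [Module R M] [IsScalarTower Q R M]
  [AddCommGroup K] [Module Q K] [AddCommGroup F] [Module Q F] (u : K →ₗ[Q] F)

lemma cancelBaseChange_lTensor_baseChange (x : M ⊗[R] (R ⊗[Q] K)) :
    AlgebraTensorModule.cancelBaseChange Q R R M F ((u.baseChange R).lTensor M x) =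
      u.lTensor M (AlgebraTensorModule.cancelBaseChange Q R R M K x) := by
  induction x with
  | zero => simp only [map_zero]
  | add x y hx hy => simp only [map_add, hx, hy]
  | tmul m y =>
    induction y with
    | zero => simp only [map_zero, tmul_zero]
    | add x y hx hy => simp only [map_add, tmul_add, hx, hy]
    | tmul r k => simp

/-- `ker (M ⊗_Q K → M ⊗_Q F)` computed over `R`, by cancelling the base change in
`M ⊗_R (R ⊗_Q -) = M ⊗_Q -`. -/
noncomputable def kerLTensorEquivKerLTensorBaseChange :
    ker (u.lTensor M) ≃ₗ[Q] ker ((u.baseChange R).lTensor M) :=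
  let e := (AlgebraTensorModule.cancelBaseChange Q R R M K).restrictScalars Q
  have h : (ker (u.lTensor M)).comap e.toLinearMap =
      (ker ((u.baseChange R).lTensor M)).restrictScalars Q := by
    ext x
    rw [Submodule.mem_comap, mem_ker, Submodule.restrictScalars_mem, mem_ker,
      ← (AlgebraTensorModule.cancelBaseChange Q R R M F).map_eq_zero_iff,
      cancelBaseChange_lTensor_baseChange]
    rfl
  (e.ofSubmodule' _).symm.trans (LinearEquiv.ofEq _ _ h)

end BaseChange

section Prod

variable {A : Type*} [CommRing A] (M : Type*) {K K' F F' X : Type*} [AddCommGroup M] [Module A M]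
  [AddCommGroup K] [Module A K] [AddCommGroup K'] [Module A K'] [AddCommGroup F] [Module A F]
  [AddCommGroup F'] [Module A F'] [AddCommGroup X] [Module A X]

/-- `ker (X × K → F) = X × ker (K → F)` for a map that vanishes on `X`. -/
def kerCompSndEquiv (u : K →ₗ[A] F) : ker (u ∘ₗ snd A X K) ≃ₗ[A] X × ker u where
  toFun x := (x.1.1, ⟨x.1.2, x.2⟩)
  invFun y := ⟨(y.1, y.2.1), y.2.2⟩
  map_add' _ _ := rfl
  map_smul' _ _ := rfl

/-- If `u : K → F` is identified with a map `X × K' → F'` that vanishes on `X` and restricts to `u'`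
on `K'`, then `M ⊗ X` splits off the kernel of `M ⊗ u`. -/
noncomputable def kerLTensorEquivProd {u : K →ₗ[A] F} {u' : K' →ₗ[A] F'} (e : K ≃ₗ[A] X × K')
    (e' : F ≃ₗ[A] F') (h : ∀ x, e' (u x) = u' (e x).2) :
    ker (u.lTensor M) ≃ₗ[A] (M ⊗[A] X) × ker (u'.lTensor M) :=
  let E := e.lTensor M ≪≫ₗ TensorProduct.prodRight A A M X K'
  have hE : (e'.lTensor M).toLinearMap ∘ₗ u.lTensor M =
      (u'.lTensor M ∘ₗ snd A (M ⊗[A] X) (M ⊗[A] K')) ∘ₗ E.toLinearMap :=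
    TensorProduct.ext' fun m x ↦ congrArg (m ⊗ₜ[A] ·) (h x)
  E.ofSubmodules _ _ (by
    rw [← LinearEquiv.ker_comp (e'.lTensor M) (u.lTensor M), hE, ker_comp]
    exact Submodule.map_comap_eq_of_surjective E.surjective _) ≪≫ₗ kerCompSndEquiv _

end Prod

end KerLTensor

section RestrictScalars

attribute [local instance] RestrictScalars.moduleOrig

variable {Q R X Y : Type*} [CommRing Q] [CommRing R] [Algebra Q R] [AddCommGroup X] [Module R X]
  [AddCommGroup Y] [Module R Y]

/-- An `R`-linear equivalence between `R`-modules viewed as `Q`-modules. -/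
noncomputable def restrictScalarsCongr (e : X ≃ₗ[R] Y) :
    RestrictScalars Q R X ≃ₗ[Q] RestrictScalars Q R Y :=
  let e' : RestrictScalars Q R X ≃ₗ[R] RestrictScalars Q R Y := e
  e'.restrictScalars Q

/-- An `R`-linear equivalence as a `Q`-linear one, where only the source already carries a
`Q`-module structure. -/
noncomputable def restrictScalarsEquiv [Module Q X] [IsScalarTower Q R X] (e : X ≃ₗ[R] Y) :
    X ≃ₗ[Q] RestrictScalars Q R Y :=
  let e' : X ≃ₗ[R] RestrictScalars Q R Y := e
  e'.restrictScalars Q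

end RestrictScalars

section TorBaseChange

attribute [local instance] RestrictScalars.moduleOrig

variable {Q : Type u} (R : Type u) [CommRing Q] [CommRing R] [Algebra Q R]
  (M : Type u) {N K F : Type u} [AddCommGroup M] [Module Q M] [Module R M] [IsScalarTower Q R M]
  [AddCommGroup K] [Module Q K] [AddCommGroup F] [Module Q F] [AddCommGroup N] [Module Q N]

lemma IsShortExact_s15.baseChange [Module.Projective Q F] {ι : K →ₗ[Q] F} {π : F →ₗ[Q] N}
    (h : IsShortExact_s15 ι π) [Subsingleton (torModule Q 1 R N)] :
    IsShortExact_s15 (ι.baseChange R) (π.baseChange R) where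
  injective :=
    have := (torModule.oneEquivKer R h).symm.subsingleton
    LinearMap.ker_eq_bot.1 (Submodule.subsingleton_iff_eq_bot.1 this)
  surjective := LinearMap.lTensor_surjective R h.surjective
  exact := lTensor_exact R h.exact h.surjective

theorem nonempty_torModule_equiv_baseChange (hN : ∀ n, Subsingleton (torModule Q (n + 1) R N))
    (n : ℕ) :
    Nonempty (torModule Q n M N ≃ₗ[Q] RestrictScalars Q R (torModule R n M (R ⊗[Q] N))) := by
  have := hN 0
  have h := isShortExact_ker_subtype_s15 (Finsupp.linearCombination_id_surjective Q N)
  induction n using Nat.twoStepInduction generalizing N with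
  | zero =>
    let e := (AlgebraTensorModule.cancelBaseChange Q R R M N).symm ≪≫ₗ
      (torModule.zeroEquiv R M _).symm
    exact ⟨torModule.zeroEquiv Q M N ≪≫ₗ restrictScalarsEquiv e⟩
  | one =>
    let e := torModule.oneEquivKer M h ≪≫ₗ kerLTensorEquivKerLTensorBaseChange R M
      (LinearMap.ker _).subtype
    let e' := (torModule.oneEquivKer M (h.baseChange R)).symm
    exact ⟨e ≪≫ₗ restrictScalarsEquiv e'⟩
  | more n _ ih =>
    have hK (n : ℕ) :
        Subsingleton (torModule Q (n + 1) R (Finsupp.linearCombination Q (id : N → N)).ker) :=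
      have := hN (n + 1)
      (torModule.dimensionShift R h n).symm.subsingleton
    obtain ⟨e⟩ := ih hK (hK 0)
      (isShortExact_ker_subtype_s15 (Finsupp.linearCombination_id_surjective Q _))
    exact ⟨torModule.dimensionShift M h n ≪≫ₗ e ≪≫ₗ
      restrictScalarsCongr (torModule.dimensionShift M (h.baseChange R) n).symm⟩

end TorBaseChange

section TorVanishing

variable {Q R : Type*} [CommRing Q] [CommRing R] [Algebra Q R] {f : Q}

lemma one_tmul_eq_zero_iff_exists_smul_eq (hs : Function.Surjective (algebraMap Q R))
    (hker : RingHom.ker (algebraMap Q R) = Ideal.span {f}) {N : Type*} [AddCommGroup N] [Module Q N]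
    {x : N} : (1 : R) ⊗ₜ[Q] x = 0 ↔ ∃ y, f • y = x := by
  have hex : Function.Exact (LinearMap.lsmul Q Q f) (Algebra.linearMap Q R) := fun q ↦ by
    rw [Algebra.linearMap_apply, ← RingHom.mem_ker, hker, Ideal.mem_span_singleton']
    simp only [Set.mem_range, LinearMap.lsmul_apply, smul_eq_mul, mul_comm]
  constructor
  · intro h
    have h' : (Algebra.linearMap Q R).rTensor N (1 ⊗ₜ x) = 0 := by
      rw [LinearMap.rTensor_tmul, Algebra.linearMap_apply, map_one, h]
    obtain ⟨t, ht⟩ := (rTensor_exact N hex hs _).1 h'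
    obtain ⟨y, rfl⟩ := (TensorProduct.lid Q N).symm.surjective t
    refine ⟨y, ?_⟩
    simpa using congrArg (TensorProduct.lid Q N) ht
  · rintro ⟨y, rfl⟩
    have hf : algebraMap Q R f = 0 := by
      rw [← RingHom.mem_ker, hker]
      exact Ideal.mem_span_singleton_self f
    rw [← smul_tmul, Algebra.smul_def, hf, zero_mul, zero_tmul]

lemma baseChange_injective_of_isSMulRegular (hs : Function.Surjective (algebraMap Q R))
    (hker : RingHom.ker (algebraMap Q R) = Ideal.span {f})
    {K F N : Type*} [AddCommGroup K] [Module Q K] [AddCommGroup F] [Module Q F] [AddCommGroup N]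
    [Module Q N] {ι : K →ₗ[Q] F} {π : F →ₗ[Q] N} (h : IsShortExact_s15 ι π) (hN : IsSMulRegular N f) :
    Function.Injective (ι.baseChange R) := by
  rw [injective_iff_map_eq_zero]
  intro x hx
  obtain ⟨k, rfl⟩ := TensorProduct.mk_surjective Q K R hs x
  obtain ⟨y, hy⟩ := (one_tmul_eq_zero_iff_exists_smul_eq hs hker).1 hx
  have hπy : π y = 0 := hN.right_eq_zero_of_smul <| by
    rw [← map_smul, hy, h.exact.apply_apply_eq_zero]
  obtain ⟨k', rfl⟩ := (h.exact y).1 hπy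
  exact (one_tmul_eq_zero_iff_exists_smul_eq hs hker).2 ⟨k', h.injective (by rw [map_smul, hy])⟩

theorem subsingleton_torModule_succ_of_isSMulRegular {Q R : Type u} [CommRing Q] [CommRing R]
    [Algebra Q R] {f : Q} (hs : Function.Surjective (algebraMap Q R))
    (hker : RingHom.ker (algebraMap Q R) = Ideal.span {f}) (hf : IsSMulRegular Q f)
    {N : Type u} [AddCommGroup N] [Module Q N] (hN : IsSMulRegular N f) (n : ℕ) :
    Subsingleton (torModule Q (n + 1) R N) := by
  have h := isShortExact_ker_subtype_s15 (Finsupp.linearCombination_id_surjective Q N)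
  induction n generalizing N with
  | zero =>
    have hι : Function.Injective
        ((Finsupp.linearCombination Q (id : N → N)).ker.subtype.lTensor R) :=
      baseChange_injective_of_isSMulRegular hs hker h hN
    have := Submodule.subsingleton_iff_eq_bot.2 (LinearMap.ker_eq_bot.2 hι)
    exact (torModule.oneEquivKer R h).subsingleton
  | succ n ih =>
    have hK : IsSMulRegular (Finsupp.linearCombination Q (id : N → N)).ker f :=
      hf.finsupp.submodule _ _
    have := ih (N := (Finsupp.linearCombination Q (id : N → N)).ker) hK
      (isShortExact_ker_subtype_s15 (Finsupp.linearCombination_id_surjective Q _))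
    exact (torModule.dimensionShift R h n).subsingleton

end TorVanishing

open IsLocalRing

section ResidualRank

/-- `dim_k (k ⊗_A X)` as a cardinal, where `k` is the residue field of `A`. -/
noncomputable def residualRank (A X : Type*) [CommRing A] [IsLocalRing A] [AddCommMonoid X]
    [Module A X] : Cardinal :=
  Module.rank (ResidueField A) (ResidueField A ⊗[A] X)

lemma residualRank_congr {A : Type*} {X Y : Type u} [CommRing A] [IsLocalRing A] [AddCommMonoid X]
    [Module A X] [AddCommMonoid Y] [Module A Y] (e : X ≃ₗ[A] Y) :
    residualRank A X = residualRank A Y :=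
  (e.baseChange A (ResidueField A) X Y).rank_eq

lemma residualRank_prod (A X Y : Type u) [CommRing A] [IsLocalRing A] [AddCommGroup X] [Module A X]
    [AddCommGroup Y] [Module A Y] :
    residualRank A (X × Y) = residualRank A X + residualRank A Y :=
  (TensorProduct.prodRight A (ResidueField A) (ResidueField A) X Y).rank_eq.trans rank_prod'

lemma residualRank_restrictScalars {Q R : Type u} [CommRing Q] [IsLocalRing Q] [CommRing R]
    [IsLocalRing R] [Algebra Q R] (hs : Function.Surjective (algebraMap Q R))
    (X : Type u) [AddCommMonoid X] [Module Q X] [Module R X] [IsScalarTower Q R X] :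
    residualRank Q X = residualRank R X := by
  have := IsLocalHom.of_surjective (algebraMap Q R) hs
  have := TensorProduct.CompatibleSMul.of_algebraMap_surjective (ResidueField R) X hs
  let e : ResidueField R ⊗[ResidueField Q] (ResidueField Q ⊗[Q] X) ≃ₗ[ResidueField R]
      ResidueField R ⊗[R] X :=
    AlgebraTensorModule.cancelBaseChange Q (ResidueField Q) (ResidueField R) (ResidueField R) X ≪≫ₗ
      (TensorProduct.equivOfCompatibleSMul Q R (ResidueField R) (ResidueField R) X).symm
  exact (Cardinal.lift_id _).symm.trans (Module.rank_baseChange.symm.trans e.rank_eq)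

end ResidualRank

section Splitting

lemma exists_maximalIdeal_linearMap_eq_one {A : Type*} [CommRing A] [IsLocalRing A]
    {x : maximalIdeal A} (hx : (x : A) ∉ maximalIdeal A ^ 2) :
    ∃ φ : maximalIdeal A →ₗ[A] ResidueField A, φ x = 1 := by
  have hx' : ((maximalIdeal A).toCotangent x : CotangentSpace A) ≠ 0 :=
    mt ((maximalIdeal A).toCotangent_eq_zero x).1 hx
  obtain ⟨g, hg⟩ := Module.Projective.exists_dual_eq_one (ResidueField A) hx'
  exact ⟨g.restrictScalars A ∘ₗ (maximalIdeal A).toCotangent, hg⟩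

lemma isShortExact_maximalIdeal_residueField (A : Type*) [CommRing A] [IsLocalRing A] :
    IsShortExact_s15 (maximalIdeal A).subtype (Algebra.linearMap A (ResidueField A)) where
  injective := (maximalIdeal A).injective_subtype
  surjective := residue_surjective
  exact x := (residue_eq_zero_iff x).trans (by simp)

section LocalHom

variable (Q R : Type*) [CommRing Q] [IsLocalRing Q] [CommRing R] [IsLocalRing R] [Algebra Q R]
  [IsLocalHom (algebraMap Q R)]

/-- The map `m_Q → m_R` induced by a local homomorphism `Q → R`. -/
def maximalIdealMap : maximalIdeal Q →ₗ[Q] maximalIdeal R where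
  toFun x := ⟨algebraMap Q R x, map_nonunit _ _ x.2⟩
  map_add' _ _ := Subtype.ext (map_add _ _ _)
  map_smul' q _ := Subtype.ext <| (map_mul _ _ _).trans (Algebra.smul_def q _).symm

variable {Q R}

/-- The map `R ⊗ m_Q → k × m_R` with components `φ` and the canonical map. It is an isomorphism when
`φ` takes the value `1` at a generator of the kernel of `Q → R`. -/
noncomputable def maximalIdealSplitting (φ : maximalIdeal Q →ₗ[Q] ResidueField R) :
    R ⊗[Q] maximalIdeal Q →ₗ[R] ResidueField R × maximalIdeal R :=
  (φ.prod (maximalIdealMap Q R)).liftBaseChange R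

lemma maximalIdealSplitting_tmul (φ : maximalIdeal Q →ₗ[Q] ResidueField R) (r : R)
    (x : maximalIdeal Q) :
    maximalIdealSplitting φ (r ⊗ₜ x) = r • (φ x, maximalIdealMap Q R x) :=
  LinearMap.liftBaseChange_tmul ..

lemma rid_baseChange_subtype_maximalIdeal (φ : maximalIdeal Q →ₗ[Q] ResidueField R)
    (x : R ⊗[Q] maximalIdeal Q) :
    AlgebraTensorModule.rid Q R R ((maximalIdeal Q).subtype.baseChange R x) =
      (maximalIdealSplitting φ x).2 := by
  induction x with
  | zero => simp only [map_zero, Prod.snd_zero, Submodule.coe_zero]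
  | add x y hx hy => simp only [map_add, hx, hy, Prod.snd_add, Submodule.coe_add]
  | tmul r x =>
    rw [maximalIdealSplitting_tmul, LinearMap.baseChange_tmul, AlgebraTensorModule.rid_tmul,
      Algebra.smul_def, mul_comm]
    rfl

variable {f : maximalIdeal Q} {φ : maximalIdeal Q →ₗ[Q] ResidueField R}

lemma maximalIdealSplitting_injective (hs : Function.Surjective (algebraMap Q R))
    (hker : RingHom.ker (algebraMap Q R) = Ideal.span {(f : Q)}) (hφ : φ f = 1) :
    Function.Injective (maximalIdealSplitting φ) := by
  rw [injective_iff_map_eq_zero]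
  intro x hx
  obtain ⟨y, rfl⟩ := TensorProduct.mk_surjective Q (maximalIdeal Q) R hs x
  rw [TensorProduct.mk_apply, maximalIdealSplitting_tmul, one_smul, Prod.mk_eq_zero] at hx
  obtain ⟨hφy, hy⟩ := hx
  have hyf : (y : Q) ∈ Ideal.span {(f : Q)} := hker ▸ congrArg Subtype.val hy
  obtain ⟨c, hc⟩ := Ideal.mem_span_singleton'.1 hyf
  obtain rfl : c • f = y := Subtype.ext hc
  have hcm : c ∈ maximalIdeal Q := by
    rw [map_smul, hφ, ← Algebra.algebraMap_eq_smul_one, IsScalarTower.algebraMap_apply Q R] at hφy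
    exact (map_mem_nonunits_iff (algebraMap Q R) c).1 ((residue_eq_zero_iff _).1 hφy)
  have hcf : (f : Q) • (⟨c, hcm⟩ : maximalIdeal Q) = c • f := Subtype.ext (mul_comm _ _)
  exact (one_tmul_eq_zero_iff_exists_smul_eq hs hker).2 ⟨_, hcf⟩

lemma maximalIdealSplitting_surjective (hs : Function.Surjective (algebraMap Q R))
    (hf : algebraMap Q R f = 0) (hφ : φ f = 1) :
    Function.Surjective (maximalIdealSplitting φ) := by
  rintro ⟨a, b, hb⟩
  obtain ⟨q, rfl⟩ := hs b
  let x : maximalIdeal Q := ⟨q, (map_mem_nonunits_iff (algebraMap Q R) q).1 hb⟩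
  obtain ⟨c, hc⟩ := residue_surjective (a - φ x)
  have hf' : maximalIdealMap Q R f = 0 := Subtype.ext hf
  refine ⟨1 ⊗ₜ x + c ⊗ₜ f, ?_⟩
  rw [map_add, maximalIdealSplitting_tmul, maximalIdealSplitting_tmul, hφ, hf', one_smul]
  refine Prod.ext ?_ (by rw [Prod.snd_add, Prod.smul_snd, smul_zero, add_zero]; rfl)
  change φ x + c • 1 = a
  rw [← Algebra.algebraMap_eq_smul_one, ResidueField.algebraMap_eq, hc, add_sub_cancel]

end LocalHom

variable {Q R : Type*} [CommRing Q] [IsLocalRing Q] [CommRing R] [IsLocalRing R] [Algebra Q R]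

/-- The residue field does not change along a surjection `Q → R`. -/
noncomputable def residueFieldEquiv (hs : Function.Surjective (algebraMap Q R)) :
    ResidueField Q ≃ₗ[Q] ResidueField R :=
  have := IsLocalHom.of_surjective (algebraMap Q R) hs
  have hsurj : Function.Surjective (algebraMap (ResidueField Q) (ResidueField R)) :=
    Ideal.Quotient.lift_surjective_of_surjective _ _ (residue_surjective.comp hs)
  .ofBijective (IsScalarTower.toAlgHom Q (ResidueField Q) (ResidueField R)).toLinearMap
    ⟨(algebraMap (ResidueField Q) (ResidueField R)).injective, hsurj⟩

lemma residueFieldEquiv_one (hs : Function.Surjective (algebraMap Q R)) :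
    residueFieldEquiv hs 1 = 1 :=
  have := IsLocalHom.of_surjective (algebraMap Q R) hs
  map_one (algebraMap (ResidueField Q) (ResidueField R))

theorem exists_baseChange_maximalIdeal_equiv {f : maximalIdeal Q}
    (hs : Function.Surjective (algebraMap Q R))
    (hker : RingHom.ker (algebraMap Q R) = Ideal.span {(f : Q)})
    (hf : (f : Q) ∉ maximalIdeal Q ^ 2) :
    ∃ e : R ⊗[Q] maximalIdeal Q ≃ₗ[R] ResidueField R × maximalIdeal R,
      ∀ x, AlgebraTensorModule.rid Q R R ((maximalIdeal Q).subtype.baseChange R x) = (e x).2 := by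
  have := IsLocalHom.of_surjective (algebraMap Q R) hs
  obtain ⟨φ, hφ⟩ := exists_maximalIdeal_linearMap_eq_one hf
  have hφ' : ((residueFieldEquiv hs).toLinearMap ∘ₗ φ) f = 1 := by
    rw [LinearMap.comp_apply, hφ, LinearEquiv.coe_coe, residueFieldEquiv_one]
  have hf' : algebraMap Q R f = 0 := by
    rw [← RingHom.mem_ker, hker]
    exact Ideal.mem_span_singleton_self _
  exact ⟨.ofBijective _ ⟨maximalIdealSplitting_injective hs hker hφ',
    maximalIdealSplitting_surjective hs hf' hφ'⟩, rid_baseChange_subtype_maximalIdeal _⟩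

end Splitting

section Betti

attribute [local instance] RestrictScalars.moduleOrig

/-- The `i`-th Betti number of a module over a local ring, as a cardinal. -/
noncomputable def bettiRank (A M : Type u) [CommRing A] [IsLocalRing A] [AddCommGroup M]
    [Module A M] (i : ℕ) : Cardinal :=
  residualRank A (torModule A i M (ResidueField A))

lemma natCast_bettiNumber (A M : Type) [CommRing A] [IsLocalRing A] [IsNoetherianRing A]
    [AddCommGroup M] [Module A M] [Module.Finite A M] (i : ℕ) :
    (bettiNumber A M i : Cardinal) = bettiRank A M i :=
  have := torModule.finite (A := A) M (N := ResidueField A) i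
  Module.finrank_eq_rank (ResidueField A) (ResidueField A ⊗[A] torModule A i M (ResidueField A))

variable {Q R : Type u} [CommRing Q] [IsLocalRing Q] [CommRing R] [IsLocalRing R] [Algebra Q R]

lemma residualRank_eq_of_linearEquiv (hs : Function.Surjective (algebraMap Q R))
    {X Y : Type u} [AddCommGroup X] [Module Q X] [AddCommGroup Y] [Module R Y]
    (e : X ≃ₗ[Q] RestrictScalars Q R Y) :
    residualRank Q X = residualRank R Y :=
  (residualRank_congr e).trans (residualRank_restrictScalars hs (RestrictScalars Q R Y))

variable (M : Type u) [AddCommGroup M] [Module Q M] [Module R M] [IsScalarTower Q R M]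

lemma bettiRank_zero_eq (hs : Function.Surjective (algebraMap Q R)) :
    bettiRank Q M 0 = bettiRank R M 0 :=
  have := TensorProduct.CompatibleSMul.of_algebraMap_surjective M (ResidueField R) hs
  let eQ : torModule Q 0 M (ResidueField Q) ≃ₗ[Q] M ⊗[Q] ResidueField R :=
    torModule.zeroEquiv Q M _ ≪≫ₗ (residueFieldEquiv hs).lTensor M
  let eR : M ⊗[Q] ResidueField R ≃ₗ[R] torModule R 0 M (ResidueField R) :=
    (TensorProduct.equivOfCompatibleSMul Q R R M (ResidueField R)).symm ≪≫ₗ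
      (torModule.zeroEquiv R M _).symm
  residualRank_eq_of_linearEquiv hs (eQ ≪≫ₗ restrictScalarsEquiv eR)

lemma bettiRank_one_eq (hs : Function.Surjective (algebraMap Q R))
    (e : R ⊗[Q] maximalIdeal Q ≃ₗ[R] ResidueField R × maximalIdeal R)
    (he : ∀ x, AlgebraTensorModule.rid Q R R ((maximalIdeal Q).subtype.baseChange R x) = (e x).2) :
    bettiRank Q M 1 = bettiRank R M 1 + bettiRank R M 0 := by
  let eQ := torModule.oneEquivKer M (isShortExact_maximalIdeal_residueField Q) ≪≫ₗ
    kerLTensorEquivKerLTensorBaseChange R M (maximalIdeal Q).subtype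
  let eR := kerLTensorEquivProd M (u := (maximalIdeal Q).subtype.baseChange R)
    (u' := (maximalIdeal R).subtype) e (AlgebraTensorModule.rid Q R R) he
  let e₀ := (torModule.zeroEquiv R M (ResidueField R)).symm
  let e₁ := (torModule.oneEquivKer M (isShortExact_maximalIdeal_residueField R)).symm
  let eR' := eR ≪≫ₗ e₀.prodCongr e₁
  have h := residualRank_eq_of_linearEquiv hs (eQ ≪≫ₗ restrictScalarsEquiv eR')
  rw [residualRank_prod] at h
  exact h.trans (add_comm _ _)

lemma bettiRank_add_two_eq (hs : Function.Surjective (algebraMap Q R))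
    (hTor : ∀ n, Subsingleton (torModule Q (n + 1) R (maximalIdeal Q)))
    (e : R ⊗[Q] maximalIdeal Q ≃ₗ[R] ResidueField R × maximalIdeal R) (n : ℕ) :
    bettiRank Q M (n + 2) = bettiRank R M (n + 2) + bettiRank R M (n + 1) := by
  obtain ⟨eQ⟩ := nonempty_torModule_equiv_baseChange R M hTor (n + 1)
  let eR := torModule.congr M (n + 1) e ≪≫ₗ
    torModule.prodEquiv R M (ResidueField R) (maximalIdeal R) (n + 1)
  let shiftQ := torModule.dimensionShift M (isShortExact_maximalIdeal_residueField Q) n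
  let shiftR := (torModule.dimensionShift M (isShortExact_maximalIdeal_residueField R) n).symm
  have h := residualRank_eq_of_linearEquiv hs
    (shiftQ ≪≫ₗ eQ ≪≫ₗ restrictScalarsCongr (eR ≪≫ₗ (LinearEquiv.refl R _).prodCongr shiftR))
  rw [residualRank_prod] at h
  exact h.trans (add_comm _ _)

theorem betti_base_eq_of_regular_element_general (hs : Function.Surjective (algebraMap Q R))
    {f : Q} (hker : RingHom.ker (algebraMap Q R) = Ideal.span {f}) (hfm : f ∈ maximalIdeal Q)
    (hfm2 : f ∉ maximalIdeal Q ^ 2) (hreg : IsSMulRegular Q f) (i : ℕ) :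
    bettiRank Q M i = bettiRank R M i + if i = 0 then 0 else bettiRank R M (i - 1) := by
  obtain ⟨e, he⟩ := exists_baseChange_maximalIdeal_equiv (f := ⟨f, hfm⟩) hs hker hfm2
  match i with
  | 0 => simpa using bettiRank_zero_eq M hs
  | 1 => exact bettiRank_one_eq M hs e he
  | n + 2 =>
    exact bettiRank_add_two_eq M hs (subsingleton_torModule_succ_of_isSMulRegular hs hker hreg
      (hreg.submodule _ _)) e n

end Betti

/-- **Nagata's equality, `n = 1`.** Let `f ∈ m ∖ m²` be a regular element
(nonzerodivisor) of a Noetherian local ring `Q` and set `R = Q/(f)`. Then for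
every finitely generated `R`-module `M` and all `i ≥ 0`,
`β_i^Q(M) = β_i^R(M) + β_{i−1}^R(M)` (with `β_{−1}^R(M) = 0`), i.e.
`P_M^Q(t) = (1+t)·P_M^R(t)`. -/
theorem betti_base_eq_of_regular_element
    (Q : Type) [CommRing Q] [IsNoetherianRing Q] [IsLocalRing Q]
    (f : Q) (hfm : f ∈ IsLocalRing.maximalIdeal Q)
    (hfm2 : f ∉ (IsLocalRing.maximalIdeal Q) ^ 2)
    (hreg : ∀ x : Q, x * f = 0 → x = 0)
    [IsLocalRing (Q ⧸ Ideal.span {f})]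
    (M : Type) [AddCommGroup M] [Module Q M] [Module (Q ⧸ Ideal.span {f}) M]
    [IsScalarTower Q (Q ⧸ Ideal.span {f}) M]
    [Module.Finite (Q ⧸ Ideal.span {f}) M]
    (i : ℕ) :
    bettiNumber Q M i =
      bettiNumber (Q ⧸ Ideal.span {f}) M i +
        (if i = 0 then 0 else bettiNumber (Q ⧸ Ideal.span {f}) M (i - 1)) := by
  have hs : Function.Surjective (algebraMap Q (Q ⧸ Ideal.span {f})) := Ideal.Quotient.mk_surjective
  have hf : IsSMulRegular Q f := isSMulRegular_iff_right_eq_zero_of_smul.2 fun x hx ↦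
    hreg x ((mul_comm x f).trans hx)
  have : Module.Finite Q M := Module.Finite.trans (Q ⧸ Ideal.span {f}) M
  apply Nat.cast_injective (R := Cardinal.{0})
  simpa [natCast_bettiNumber] using
    betti_base_eq_of_regular_element_general M hs Ideal.mk_ker hfm hfm2 hf i
end
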